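/- Let P be any one of the conjugacy-invariant sets SS(x), SSS(x), USS(x), RSSS(x). If y ∈ P and a, b are permutation braids with a^{-1}ya ∈ P and b^{-1}yb ∈ P, then (a∧b)^{-1} y (a∧b) ∈ P, where ∧ is the left meet of permutation braids. Consequently, for each y ∈ P there is a unique minimal permutation braid a (with respect to left divisibility) such that a^{-1}ya ∈ P. -/

import Mathlib

/-! Basic definitions for the braid group `B_n`, its Garside structure,
and related notions, following Garside/El-Rifai–Morton.
Generators are indexed by `i : Fin (n-1)`, with `σ i` corresponding to the
Artin generator `σ_{i+1}` (1-based) of the paper. -/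

/-- The braid relations, as a set of elements of the free group. -/
def braidRels (n : ℕ) : Set (FreeGroup (Fin (n - 1))) :=
  { r | (∃ i j : Fin (n - 1), (i : ℕ) + 1 < (j : ℕ) ∧
          r = .of i * .of j * (.of i)⁻¹ * (.of j)⁻¹) ∨
        (∃ i j : Fin (n - 1), (i : ℕ) + 1 = (j : ℕ) ∧
          r = (.of i * .of j * .of i) * (.of j * .of i * .of j)⁻¹) }

/-- The braid group on `n` strands. -/
abbrev BraidGroup (n : ℕ) := PresentedGroup (braidRels n)

namespace BraidGroup

variable {n : ℕ}

/-- The Artin generator `σ_{i+1}` (`i` is a 0-based index). -/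
def σ (i : Fin (n - 1)) : BraidGroup n := PresentedGroup.of i

/-- `σ'` with a natural-number 0-based index (junk value `1` out of range). -/
def σ' (n : ℕ) (i : ℕ) : BraidGroup n := if h : i < n - 1 then σ ⟨i, h⟩ else 1

/-- The fundamental braid `Δ = (σ_1⋯σ_{n-1})(σ_1⋯σ_{n-2})⋯(σ_1σ_2)σ_1`. -/
def Δ (n : ℕ) : BraidGroup n :=
  (((List.range (n - 1)).reverse).map
    (fun j => ((List.range (j + 1)).map (σ' n)).prod)).prod

/-- The monoid of positive braids inside `B_n` (the image of `B_n^+`). -/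
def positives (n : ℕ) : Submonoid (BraidGroup n) :=
  Submonoid.closure (Set.range (σ (n := n)))

/-- `x` is a positive braid. -/
def IsPositive (x : BraidGroup n) : Prop := x ∈ positives n

/-- The prefix (left-divisibility) order: `x ≼ y` iff `x⁻¹y` is positive. -/
def LeftDvd (x y : BraidGroup n) : Prop := ∃ p, IsPositive p ∧ x * p = y

/-- The right-divisibility order: `x ≼_R y` iff `y x⁻¹` is positive. -/
def RightDvd (x y : BraidGroup n) : Prop := ∃ p, IsPositive p ∧ p * x = y

/-- Permutation braids: positive left divisors of `Δ`. -/
def IsPermBraid (x : BraidGroup n) : Prop := IsPositive x ∧ LeftDvd x (Δ n)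

/-- The involution `τ` of `B_n`, determined by `τ(σ_i) = σ_{n-i}`
(on 0-based indices: `i ↦ (n-2) - i`, i.e. `Fin.rev`). -/
noncomputable def τ (n : ℕ) : BraidGroup n →* BraidGroup n :=
  Classical.epsilon (fun f => ∀ i : Fin (n - 1), f (σ i) = σ i.rev)

/-- `τ^u` for an integer `u`: equals `τ` for odd `u` and the identity for even `u`
(`τ` is an involution). -/
noncomputable def τpow (u : ℤ) (x : BraidGroup n) : BraidGroup n :=
  if Even u then x else τ n x

/-- The product `a⬝b` of a permutation braid `a` and a positive braid `b` is left
weighted iff `a* ∧ b = e`, i.e. no generator left-divides both `a* = a⁻¹Δ` and `b`. -/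
def IsLeftWeighted (a b : BraidGroup n) : Prop :=
  ∀ i : Fin (n - 1), ¬ (LeftDvd (σ i) (a⁻¹ * Δ n) ∧ LeftDvd (σ i) b)

/-- `Δ^u x_1 ⋯ x_k` is the left weighted form of `x`, where `L = [x_1, …, x_k]`. -/
def IsWeightedForm (u : ℤ) (L : List (BraidGroup n)) (x : BraidGroup n) : Prop :=
  (∀ a ∈ L, IsPermBraid a ∧ a ≠ 1 ∧ a ≠ Δ n) ∧
  L.Chain' IsLeftWeighted ∧
  x = (Δ n) ^ u * L.prod

/-- The left weighted form of a braid (chosen by choice; it exists and is unique). -/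
noncomputable def wf (x : BraidGroup n) : ℤ × List (BraidGroup n) :=
  Classical.epsilon (fun p => IsWeightedForm p.1 p.2 x)

/-- The infimum `inf(x)`. -/
noncomputable def binf (x : BraidGroup n) : ℤ := (wf x).1

/-- The canonical length `ℓ(x)`. -/
noncomputable def blen (x : BraidGroup n) : ℕ := (wf x).2.length

/-- The supremum `sup(x) = inf(x) + ℓ(x)`. -/
noncomputable def bsup (x : BraidGroup n) : ℤ := binf x + blen x

/-- The head `H(x)`: the first factor of the weighted form. -/
noncomputable def bhead (x : BraidGroup n) : BraidGroup n := ((wf x).2.head?).getD 1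

/-- The tail `T(x)`: the last factor of the weighted form. -/
noncomputable def btail (x : BraidGroup n) : BraidGroup n := ((wf x).2.getLast?).getD 1

/-- Cycling: `c(x) = τ^u(H(x))⁻¹ · x · τ^u(H(x))`. -/
noncomputable def cyc (x : BraidGroup n) : BraidGroup n :=
  (τpow (binf x) (bhead x))⁻¹ * x * τpow (binf x) (bhead x)

/-- Decycling: `d(x) = T(x) · x · T(x)⁻¹`. -/
noncomputable def decyc (x : BraidGroup n) : BraidGroup n :=
  btail x * x * (btail x)⁻¹

/-- `x` is cyclically weighted: `x_k ⬝ τ^u(x_1)` is left weighted. -/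
noncomputable def IsCW (x : BraidGroup n) : Prop :=
  IsLeftWeighted (btail x) (τpow (binf x) (bhead x))

/-- `x` is weakly cyclically weighted: `H(x·τ^u(H(x))) = H(x)`. -/
noncomputable def IsWCW (x : BraidGroup n) : Prop :=
  bhead (x * τpow (binf x) (bhead x)) = bhead x

/-- The summit set of `x`: conjugates with maximal infimum. -/
def SS (x : BraidGroup n) : Set (BraidGroup n) :=
  { y | IsConj x y ∧ ∀ z, IsConj x z → binf z ≤ binf y }

/-- The super summit set of `x`: conjugates with maximal infimum and minimal supremum. -/
def SSS (x : BraidGroup n) : Set (BraidGroup n) :=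
  { y | y ∈ SS x ∧ ∀ z, IsConj x z → bsup y ≤ bsup z }

/-- The ultra summit set of `x`. -/
def USS (x : BraidGroup n) : Set (BraidGroup n) :=
  { y ∈ SSS x | ∃ M : ℕ, 0 < M ∧ cyc^[M] y = y }

/-- The reduced super summit set of `x`. -/
def RSSS (x : BraidGroup n) : Set (BraidGroup n) :=
  { y | IsConj x y ∧ (∃ M : ℕ, 0 < M ∧ cyc^[M] y = y) ∧
        (∃ N : ℕ, 0 < N ∧ decyc^[N] y = y) }

/-- The left meet (greatest common left divisor) of two braids. -/
noncomputable def leftMeet (a b : BraidGroup n) : BraidGroup n :=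
  Classical.epsilon (fun m => IsPositive m ∧ LeftDvd m a ∧ LeftDvd m b ∧
    ∀ c, IsPositive c → LeftDvd c a → LeftDvd c b → LeftDvd c m)

/-- `x` is periodic: some positive power of `x` is a power of `Δ²`. -/
def IsPeriodic (x : BraidGroup n) : Prop :=
  ∃ m : ℕ, 0 < m ∧ ∃ k : ℤ, x ^ m = (Δ n) ^ (2 * k)

/-- The free generator `x_{i+1}` of `π₁` of the `n`-punctured disk (0-based index;
junk value `1` out of range). -/
def freeGen (n : ℕ) (i : ℕ) : FreeGroup (Fin n) := if h : i < n then .of ⟨i, h⟩ else 1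

/-- The Artin action of `B_n` on the free group `F_n`:
`σ_i` sends `x_i ↦ x_i x_{i+1} x_i⁻¹`, `x_{i+1} ↦ x_i`, fixing the other generators. -/
noncomputable def artin (n : ℕ) : BraidGroup n →* Monoid.End (FreeGroup (Fin n)) :=
  Classical.epsilon (fun f => ∀ i : Fin (n - 1),
    f (σ i) = FreeGroup.lift (fun j : Fin n =>
      if (j : ℕ) = (i : ℕ) then freeGen n i * freeGen n (i + 1) * (freeGen n i)⁻¹
      else if (j : ℕ) = (i : ℕ) + 1 then freeGen n i
      else FreeGroup.of j))

/-- The element of `π₁` represented by the round curve enclosing punctures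
`I.1 + 1, …, I.2` (1-based): the product `x_{I.1+1} ⋯ x_{I.2}`. -/
def curveWord (n : ℕ) (I : ℕ × ℕ) : FreeGroup (Fin n) :=
  ((List.range (I.2 - I.1)).map (fun t => freeGen n (I.1 + t))).prod

/-- An essential round curve: it encloses at least `2` and at most `n-1` punctures. -/
def EssentialCurve (n : ℕ) (I : ℕ × ℕ) : Prop :=
  I.1 + 2 ≤ I.2 ∧ I.2 ≤ n ∧ I.2 - I.1 ≤ n - 1

/-- Two round curves are disjoint (as curves): the intervals are disjoint or nested. -/
def CurvesCompatible (I J : ℕ × ℕ) : Prop :=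
  I.2 ≤ J.1 ∨ J.2 ≤ I.1 ∨ (I.1 ≤ J.1 ∧ J.2 ≤ I.2) ∨ (J.1 ≤ I.1 ∧ I.2 ≤ J.2)

/-- `x` is reducible: some conjugate of `x` preserves, up to conjugacy in `π₁`
(i.e. up to isotopy) and orientation, a nonempty system of disjoint essential
round curves. -/
noncomputable def IsReducible (x : BraidGroup n) : Prop :=
  ∃ y, IsConj x y ∧ ∃ F : Finset (ℕ × ℕ), F.Nonempty ∧
    (∀ I ∈ F, EssentialCurve n I) ∧
    (∀ I ∈ F, ∀ J ∈ F, I ≠ J → CurvesCompatible I J) ∧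
    (∀ I ∈ F, ∃ J ∈ F, ∃ g : FreeGroup (Fin n),
      artin n y (curveWord n I) = g * curveWord n J * g⁻¹ ∨
      artin n y (curveWord n I) = g * (curveWord n J)⁻¹ * g⁻¹)

/-- `x` is pseudo-Anosov: neither periodic nor reducible (Nielsen–Thurston). -/
noncomputable def IsPseudoAnosov (x : BraidGroup n) : Prop :=
  ¬ IsPeriodic x ∧ ¬ IsReducible x

/-- `σ_i` (1-based index `i`) left-divides the positive braid `w`, i.e. `i` is
 a descent of `w`. -/
def HasDescent (n : ℕ) (i : ℕ) (w : BraidGroup n) : Prop := LeftDvd (σ' n (i - 1)) w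

/-- `D(n,k,i)`: the probability that a product of `k` independent uniformly random
permutation braids begins with the descent `i` (1-based), computed by counting. -/
noncomputable def descentProb (n k : ℕ) (i : ℕ) : ℝ :=
  ({ f : Fin k → BraidGroup n | (∀ j, IsPermBraid (f j)) ∧
      HasDescent n i (List.ofFn f).prod }.ncard : ℝ) / (n.factorial ^ k : ℝ)

/-- `D(n,k)`: the expected number of descents of a product of `k` random
permutation braids. -/
noncomputable def descentExp (n k : ℕ) : ℝ :=
  ∑ i ∈ Finset.Icc 1 (n - 1), descentProb n k i

/-- `d(n,k) = D(n,k) - D(n,k-1)`: the expected number of descents contributed by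
the `k`-th factor. -/
noncomputable def descentInc (n k : ℕ) : ℝ := descentExp n k - descentExp n (k - 1)


end BraidGroup

namespace BraidGroup
namespace Mon

/-- Defining relations of the positive braid monoid. -/
def brel (N : ℕ) (w w' : FreeMonoid (Fin N)) : Prop :=
  (∃ i j : Fin N, (i : ℕ) + 1 < (j : ℕ) ∧ w = .of i * .of j ∧ w' = .of j * .of i) ∨
  (∃ i j : Fin N, (i : ℕ) + 1 = (j : ℕ) ∧ w = .of i * .of j * .of i ∧
    w' = .of j * .of i * .of j)

/-- The abstract positive braid monoid with `N` generators. -/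
abbrev M (N : ℕ) := PresentedMonoid (brel N)

variable {N : ℕ}

/-- generators -/
def s (i : Fin N) : M N := PresentedMonoid.of (brel N) i

/-- adjacency of generators -/
def Adj (i j : Fin N) : Prop := (i : ℕ) + 1 = j ∨ (j : ℕ) + 1 = i

theorem Adj.symm {i j : Fin N} (h : Adj i j) : Adj j i := Or.symm h

theorem Adj.ne {i j : Fin N} (h : Adj i j) : i ≠ j := by
  rintro rfl
  rcases h with h | h <;> omega

theorem s_comm {i j : Fin N} (h : ¬ Adj i j) : s i * s j = s j * s i := by
  rcases lt_trichotomy (i : ℕ) j with h' | h' | h'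
  · have : (i : ℕ) + 1 < j := by unfold Adj at h; omega
    exact PresentedMonoid.mk_eq_mk_of_rel (Or.inl ⟨i, j, this, rfl, rfl⟩)
  · rw [Fin.ext h']
  · have : (j : ℕ) + 1 < i := by unfold Adj at h; omega
    exact (PresentedMonoid.mk_eq_mk_of_rel (Or.inl ⟨j, i, this, rfl, rfl⟩)).symm

theorem s_braid {i j : Fin N} (h : Adj i j) : s i * s j * s i = s j * s i * s j := by
  rcases h with h' | h'
  · exact PresentedMonoid.mk_eq_mk_of_rel (Or.inr ⟨i, j, h', rfl, rfl⟩)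
  · exact (PresentedMonoid.mk_eq_mk_of_rel (Or.inr ⟨j, i, h', rfl, rfl⟩)).symm

theorem s_comm' {i j : Fin N} (h : ¬ Adj i j) (x : M N) :
    s i * (s j * x) = s j * (s i * x) := by
  rw [← mul_assoc, s_comm h, mul_assoc]

theorem s_braid' {i j : Fin N} (h : Adj i j) (x : M N) :
    s i * (s j * (s i * x)) = s j * (s i * (s j * x)) := by
  simp only [← mul_assoc]; rw [s_braid h]

/-- length homomorphism -/
def lenHom (N : ℕ) : M N →* Multiplicative ℕ :=
  PresentedMonoid.lift (fun _ => Multiplicative.ofAdd 1) (by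
    rintro a b (⟨i, j, _, rfl, rfl⟩ | ⟨i, j, _, rfl, rfl⟩) <;> simp)

/-- length -/
def len (x : M N) : ℕ := Multiplicative.toAdd (lenHom N x)

theorem len_mul (x y : M N) : len (x * y) = len x + len y := by
  simp [len]

theorem len_s (i : Fin N) : len (s i) = 1 := by
  simp [len, lenHom, s]

theorem len_one : len (1 : M N) = 0 := by simp [len]

open Classical in
/-- complement -/
noncomputable def cpl (i j : Fin N) : M N :=
  if i = j then 1 else if Adj i j then s j * s i else s j

theorem cpl_self (i : Fin N) : cpl i i = 1 := by simp [cpl]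
theorem cpl_adj {i j : Fin N} (h : Adj i j) : cpl i j = s j * s i := by simp [cpl, h, h.ne]
theorem cpl_far {i j : Fin N} (h : i ≠ j) (h' : ¬ Adj i j) : cpl i j = s j := by simp [cpl, h, h']

theorem cpl_eq (i j : Fin N) : s i * cpl i j = s j * cpl j i := by
  by_cases h : i = j
  · subst h; rfl
  by_cases h' : Adj i j
  · rw [cpl_adj h', cpl_adj h'.symm, ← mul_assoc, s_braid h', mul_assoc]
  · rw [cpl_far h h', cpl_far (Ne.symm h) (fun h => h' h.symm), s_comm h']

/-- The pair of words `s i * u`, `s j * v` is equal through the lcm. -/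
def R (i : Fin N) (u : M N) (j : Fin N) (v : M N) : Prop :=
  ∃ z, u = cpl i j * z ∧ v = cpl j i * z

theorem R.symm {i j : Fin N} {u v : M N} (h : R i u j v) : R j v i u := by
  obtain ⟨z, h1, h2⟩ := h; exact ⟨z, h2, h1⟩

theorem R.refl (i : Fin N) (u : M N) : R i u i u := ⟨u, by simp [cpl_self], by simp [cpl_self]⟩

theorem R.mul_right {i j : Fin N} {u v : M N} (h : R i u j v) (x : M N) :
    R i (u * x) j (v * x) := by
  obtain ⟨z, rfl, rfl⟩ := h; exact ⟨z * x, by simp [mul_assoc], by simp [mul_assoc]⟩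

theorem R.far {i j : Fin N} {u v : M N} (h : R i u j v) (hij : i ≠ j) (ha : ¬ Adj i j) :
    ∃ z, u = s j * z ∧ v = s i * z := by
  obtain ⟨z, h1, h2⟩ := h
  rw [cpl_far hij ha] at h1
  rw [cpl_far hij.symm (fun h => ha h.symm)] at h2
  exact ⟨z, h1, h2⟩

theorem R.adj {i j : Fin N} {u v : M N} (h : R i u j v) (ha : Adj i j) :
    ∃ z, u = s j * (s i * z) ∧ v = s i * (s j * z) := by
  obtain ⟨z, h1, h2⟩ := h
  rw [cpl_adj ha] at h1
  rw [cpl_adj ha.symm] at h2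
  exact ⟨z, by rw [h1, mul_assoc], by rw [h2, mul_assoc]⟩

theorem R.mk_far {i j : Fin N} {u v : M N} (hij : i ≠ j) (ha : ¬ Adj i j) (z : M N)
    (h1 : u = s j * z) (h2 : v = s i * z) : R i u j v := by
  refine ⟨z, ?_, ?_⟩
  · rw [cpl_far hij ha, h1]
  · rw [cpl_far hij.symm (fun h => ha h.symm), h2]

theorem R.mk_adj {i j : Fin N} {u v : M N} (ha : Adj i j) (z : M N)
    (h1 : u = s j * (s i * z)) (h2 : v = s i * (s j * z)) : R i u j v := by
  refine ⟨z, ?_, ?_⟩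
  · rw [cpl_adj ha, h1, mul_assoc]
  · rw [cpl_adj ha.symm, h2, mul_assoc]

/-- Garside's property for lengths below `L`. -/
def HM (N L : ℕ) : Prop := ∀ (i j : Fin N) (u v : M N), len u < L → s i * u = s j * v → R i u j v

theorem HM.cancel {L : ℕ} (h : HM N L) {i : Fin N} {u v : M N} (hl : len u < L)
    (he : s i * u = s i * v) : u = v := by
  obtain ⟨z, h1, h2⟩ := h i i u v hl he
  rw [h1, h2]

/-- the case where `k` is far from `i` and adjacent to `j`. -/
theorem R.trans_aux {L : ℕ} (h : HM N L) {i j k : Fin N} {u v w : M N} (hl : len u ≤ L)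
    (h1 : R i u k w) (h2 : R k w j v) (hik : i ≠ k) (hij : i ≠ j)
    (haik : ¬ Adj i k) (hakj : Adj k j) : R i u j v := by
  obtain ⟨z, rfl, e1⟩ := h1.far hik haik
  obtain ⟨z', e2, rfl⟩ := h2.adj hakj
  rw [e1] at e2
  simp only [len_mul, len_s] at hl
  have haki : ¬ Adj k i := fun h => haik h.symm
  have hr := h i j z (s k * z') (by omega) e2
  by_cases haij : Adj i j
  · obtain ⟨y, rfl, e3⟩ := hr.adj haij
    simp only [len_mul, len_s] at hl
    have hlz' := congrArg len e3
    simp only [len_mul, len_s] at hlz'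
    obtain ⟨y', rfl, e4⟩ := (h k i z' (s j * y) (by omega) e3).far hik.symm haki
    simp only [len_mul, len_s] at hlz'
    obtain ⟨y'', rfl, rfl⟩ := (h j k y y' (by omega) e4).adj hakj.symm
    refine R.mk_adj haij (s k * (s j * (s i * y''))) ?_ ?_
    · rw [s_comm' haik, s_braid' hakj, s_braid' haij.symm, s_comm' haki]
    · rw [← s_braid' haij, s_comm' haki, s_braid' hakj.symm, s_comm' haki]
  · obtain ⟨y, rfl, e3⟩ := hr.far hij haij
    simp only [len_mul, len_s] at hl
    have hlz' := congrArg len e3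
    simp only [len_mul, len_s] at hlz'
    obtain ⟨y', rfl, rfl⟩ := (h k i z' y (by omega) e3).far hik.symm haki
    refine R.mk_far hij haij (s k * (s j * y')) ?_ ?_
    · rw [s_braid' hakj]
    · rw [s_comm' haik, s_comm' haij]

theorem R.trans {L : ℕ} (h : HM N L) {i j k : Fin N} {u v w : M N} (hl : len u ≤ L)
    (h1 : R i u k w) (h2 : R k w j v) : R i u j v := by
  have hlen : ∀ {i j : Fin N} {u v : M N}, R i u j v → len u = len v := by
    rintro i j _ _ ⟨z, rfl, rfl⟩
    have := congrArg len (cpl_eq i j)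
    simp only [len_mul, len_s] at this ⊢
    omega
  by_cases hik : i = k
  · subst hik
    obtain ⟨z, rfl, rfl⟩ := h1
    exact h2
  by_cases hkj : k = j
  · subst hkj
    obtain ⟨z, rfl, rfl⟩ := h2
    exact h1
  by_cases hij : i = j
  · subst hij
    by_cases ha : Adj i k
    · obtain ⟨z, rfl, e1⟩ := h1.adj ha
      obtain ⟨z', e2, rfl⟩ := h2.adj ha.symm
      rw [e1] at e2
      simp only [len_mul, len_s] at hl
      have e3 := h.cancel (by simp only [len_mul, len_s]; omega) e2
      rw [h.cancel (by omega) e3]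
      exact R.refl _ _
    · obtain ⟨z, rfl, e1⟩ := h1.far hik ha
      obtain ⟨z', e2, rfl⟩ := h2.far (Ne.symm hik) (fun h => ha h.symm)
      rw [e1] at e2
      simp only [len_mul, len_s] at hl
      rw [h.cancel (by omega) e2]
      exact R.refl _ _
  by_cases haik : Adj i k
  · by_cases hakj : Adj k j
    · have haij : ¬ Adj i j := by
        unfold Adj at *
        have := Fin.val_ne_of_ne hij
        omega
      have haji : ¬ Adj j i := fun h => haij h.symm
      obtain ⟨z, rfl, e1⟩ := h1.adj haik
      obtain ⟨z', e2, rfl⟩ := h2.adj hakj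
      rw [e1] at e2
      simp only [len_mul, len_s] at hl
      have hz := congrArg len e2
      simp only [len_mul, len_s] at hz
      obtain ⟨y, e3, e4⟩ := (h _ _ _ _ (by simp only [len_mul, len_s]; omega) e2).far hij haij
      obtain ⟨a, rfl, e5⟩ := (h _ _ _ _ (by omega) e3).adj hakj
      obtain ⟨b, rfl, e6⟩ := (h _ _ _ _ (by omega) e4).adj haik.symm
      rw [e5] at e6
      simp only [len_mul, len_s] at hl hz
      have e7 := h.cancel (by simp only [len_mul, len_s]; omega) e6
      obtain ⟨c, rfl, rfl⟩ := (h _ _ _ _ (by omega) e7).far (Ne.symm hij) haji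
      refine R.mk_far hij haij (s k * (s i * (s j * (s k * c)))) ?_ ?_
      · rw [s_comm' haij, s_braid' haik, s_braid' hakj, s_comm' haij]
      · rw [s_comm' haji, s_braid' hakj.symm, s_braid' haik.symm]
    · exact (R.trans_aux h (by rw [← hlen h2, ← hlen h1]; exact hl) h2.symm h1.symm
        (Ne.symm hkj) (Ne.symm hij) (fun h => hakj h.symm) haik.symm).symm
  · by_cases hakj : Adj k j
    · exact R.trans_aux h hl h1 h2 hik hij haik hakj
    · obtain ⟨z, rfl, e1⟩ := h1.far hik haik
      obtain ⟨z', e2, rfl⟩ := h2.far hkj hakj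
      rw [e1] at e2
      simp only [len_mul, len_s] at hl
      have hr := h _ _ _ _ (by omega) e2
      have haki : ¬ Adj k i := fun h => haik h.symm
      by_cases haij : Adj i j
      · obtain ⟨y, rfl, rfl⟩ := hr.adj haij
        refine R.mk_adj haij (s k * y) ?_ ?_
        · rw [s_comm' hakj, s_comm' haki]
        · rw [s_comm' haki, s_comm' hakj]
      · obtain ⟨y, rfl, rfl⟩ := hr.far hij haij
        refine R.mk_far hij haij (s k * y) ?_ ?_
        · rw [s_comm' hakj]
        · rw [s_comm' haki]

/-- Words related by the reduction property. -/
def Good (w w' : FreeMonoid (Fin N)) : Prop :=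
  (w = 1 ∧ w' = 1) ∨ ∃ i u j v, w = .of i * u ∧ w' = .of j * v ∧
    R i (PresentedMonoid.mk (brel N) u) j (PresentedMonoid.mk (brel N) v)

theorem word_cases (w : FreeMonoid (Fin N)) : w = 1 ∨ ∃ i u, w = .of i * u := by
  induction w using FreeMonoid.casesOn with
  | one => exact Or.inl rfl
  | of_mul i u => exact Or.inr ⟨i, u, rfl⟩

theorem of_mul_inj {i j : Fin N} {u v : FreeMonoid (Fin N)}
    (h : FreeMonoid.of i * u = FreeMonoid.of j * v) : i = j ∧ u = v := by
  have : i :: FreeMonoid.toList u = j :: FreeMonoid.toList v := congrArg FreeMonoid.toList h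
  simpa using this

theorem of_mul_ne_one {i : Fin N} {u : FreeMonoid (Fin N)} : FreeMonoid.of i * u ≠ 1 := by
  intro h
  have : i :: FreeMonoid.toList u = [] := congrArg FreeMonoid.toList h
  simp at this

theorem Good.refl (w : FreeMonoid (Fin N)) : Good w w := by
  rcases word_cases w with h | ⟨i, u, h⟩
  · exact Or.inl ⟨h, h⟩
  · exact Or.inr ⟨i, u, i, u, h, h, R.refl _ _⟩

theorem good_of_rel {L : ℕ} (h : HM N L) {w w' : FreeMonoid (Fin N)}
    (hw : ConGen.Rel (brel N) w w') :
    len (PresentedMonoid.mk (brel N) w) ≤ L + 1 → Good w w' := by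
  induction hw with
  | of x y hxy =>
    intro _
    right
    rcases hxy with ⟨i, j, hij, rfl, rfl⟩ | ⟨i, j, hij, rfl, rfl⟩
    · refine ⟨i, .of j, j, .of i, rfl, rfl, R.mk_far ?_ ?_ 1 ?_ ?_⟩
      · rintro rfl; omega
      · unfold Adj; omega
      · rw [mul_one]; rfl
      · rw [mul_one]; rfl
    · refine ⟨i, .of j * .of i, j, .of i * .of j, by rw [mul_assoc], by rw [mul_assoc],
        R.mk_adj (Or.inl hij) 1 ?_ ?_⟩
      · rw [mul_one]; rfl
      · rw [mul_one]; rfl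
  | refl x => intro _; exact Good.refl x
  | @symm x y hxy ih =>
    intro hl
    have : PresentedMonoid.mk (brel N) x = PresentedMonoid.mk (brel N) y :=
      PresentedMonoid.mk_eq_mk_iff.2 hxy
    rw [← this] at hl
    rcases ih hl with ⟨h1, h2⟩ | ⟨i, u, j, v, h1, h2, h3⟩
    · exact Or.inl ⟨h2, h1⟩
    · exact Or.inr ⟨j, v, i, u, h2, h1, h3.symm⟩
  | @trans x y z hxy hyz ih1 ih2 =>
    intro hl
    have e1 : PresentedMonoid.mk (brel N) x = PresentedMonoid.mk (brel N) y :=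
      PresentedMonoid.mk_eq_mk_iff.2 hxy
    have g1 := ih1 hl
    have g2 := ih2 (by rw [← e1]; exact hl)
    rcases g1 with ⟨h1, h2⟩ | ⟨i, u, k, w, h1, h2, h3⟩
    · subst h1 h2; exact g2
    · rcases g2 with ⟨h1', h2'⟩ | ⟨k', w', j, v, h1', h2', h3'⟩
      · exact absurd (h2.symm.trans h1') of_mul_ne_one
      · obtain ⟨rfl, rfl⟩ := of_mul_inj (h2.symm.trans h1')
        refine Or.inr ⟨i, u, j, v, h1, h2', R.trans h ?_ h3 h3'⟩
        rw [h1, map_mul, len_mul] at hl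
        have : len (PresentedMonoid.mk (brel N) (FreeMonoid.of i)) = 1 := len_s i
        omega
  | @mul w x y z hwx hyz ih1 ih2 =>
    intro hl
    rw [map_mul, len_mul] at hl
    have e2 : PresentedMonoid.mk (brel N) y = PresentedMonoid.mk (brel N) z :=
      PresentedMonoid.mk_eq_mk_iff.2 hyz
    rcases ih1 (by omega) with ⟨h1, h2⟩ | ⟨i, u, j, v, h1, h2, h3⟩
    · subst h1 h2
      rw [one_mul, one_mul]
      exact ih2 (by omega)
    · refine Or.inr ⟨i, u * y, j, v * z, by rw [h1, mul_assoc], by rw [h2, mul_assoc], ?_⟩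
      rw [map_mul, map_mul, e2]
      exact h3.mul_right _

theorem hM (N L : ℕ) : HM N L := by
  induction L with
  | zero => intro i j u v hl; omega
  | succ L ih =>
    intro i j u v hl he
    induction u using PresentedMonoid.inductionOn with | _ u
    induction v using PresentedMonoid.inductionOn with | _ v
    have he' : PresentedMonoid.mk (brel N) (.of i * u) = PresentedMonoid.mk (brel N) (.of j * v) :=
      he
    have := good_of_rel ih (PresentedMonoid.mk_eq_mk_iff.1 he') (by
      rw [map_mul, len_mul]
      have : len (PresentedMonoid.mk (brel N) (FreeMonoid.of i)) = 1 := len_s i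
      omega)
    rcases this with ⟨h1, -⟩ | ⟨i', u', j', v', h1, h2, h3⟩
    · exact absurd h1 of_mul_ne_one
    · obtain ⟨rfl, rfl⟩ := of_mul_inj h1
      obtain ⟨rfl, rfl⟩ := of_mul_inj h2
      exact h3

theorem garside_H {i j : Fin N} {u v : M N} (h : s i * u = s j * v) : R i u j v :=
  hM N (len u + 1) i j u v (Nat.lt_succ_self _) h

@[elab_as_elim]
theorem M_induction {p : M N → Prop} (x : M N) (h1 : p 1)
    (hs : ∀ i y, p y → p (s i * y)) : p x := by
  induction x using PresentedMonoid.inductionOn with | _ w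
  induction w using FreeMonoid.inductionOn' with
  | one => exact h1
  | of_mul i w ih => rw [map_mul]; exact hs _ _ ih

theorem mul_left_cancelM (x : M N) : ∀ {u v : M N}, x * u = x * v → u = v := by
  induction x using M_induction with
  | h1 => intro u v h; simpa using h
  | hs i y ih =>
    intro u v h
    rw [mul_assoc, mul_assoc] at h
    obtain ⟨z, h1, h2⟩ := garside_H h
    exact ih (h1.trans h2.symm)

end Mon
end BraidGroup

namespace BraidGroup
namespace Gen
section
variable {X : Type*} [Monoid X] (t : ℕ → X)

/-- `t 0 ⋯ t (k-1)` -/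
def Q (k : ℕ) : X := ((List.range k).map t).prod
/-- descending product -/
def Rv : ℕ → X
  | 0 => 1
  | k + 1 => t k * Rv k
/-- generic fundamental element -/
def D (k : ℕ) : X := (((List.range k).reverse).map (fun j => Q t (j + 1))).prod

theorem Q_succ (k : ℕ) : Q t (k + 1) = Q t k * t k := by simp [Q, List.range_succ]
theorem Q_succ' (k : ℕ) : ∃ y, Q t (k + 1) = t 0 * y := by
  induction k with
  | zero => exact ⟨1, by simp [Q]⟩
  | succ k ih => obtain ⟨y, hy⟩ := ih; exact ⟨y * t (k + 1), by rw [Q_succ, hy, mul_assoc]⟩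
theorem D_succ (k : ℕ) : D t (k + 1) = Q t (k + 1) * D t k := by simp [D, List.range_succ]

variable {t} {N : ℕ}


theorem comm_Q (hc : ∀ i j, i + 1 < j → j < N → t i * t j = t j * t i)
    {j k : ℕ} (hj : j < N) (hk : k < j) : t j * Q t k = Q t k * t j := by
  induction k with
  | zero => simp [Q]
  | succ k ih =>
    rw [Q_succ, ← mul_assoc, ih (by omega), mul_assoc, ← hc k j (by omega) hj, mul_assoc]

theorem comm_Rv (hc : ∀ i j, i + 1 < j → j < N → t i * t j = t j * t i)
    {j k : ℕ} (hj : j < N) (hk : k < j) : t j * Rv t k = Rv t k * t j := by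
  induction k with
  | zero => simp [Rv]
  | succ k ih =>
    rw [Rv, ← mul_assoc, ← hc k j (by omega) hj, mul_assoc, ih (by omega), mul_assoc]

theorem comm_D (hc : ∀ i j, i + 1 < j → j < N → t i * t j = t j * t i)
    {j k : ℕ} (hj : j < N) (hk : k < j) : t j * D t k = D t k * t j := by
  induction k with
  | zero => simp [D]
  | succ k ih =>
    rw [D_succ, ← mul_assoc, comm_Q hc hj hk, mul_assoc, ih (by omega), mul_assoc]

theorem D_succ' (hc : ∀ i j, i + 1 < j → j < N → t i * t j = t j * t i)
    (k : ℕ) (hk : k < N) : D t (k + 1) = D t k * Rv t (k + 1) := by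
  induction k with
  | zero => simp [D, Q, Rv]
  | succ k ih =>
    have e : Rv t (k + 1 + 1) = t (k + 1) * Rv t (k + 1) := rfl
    rw [D_succ, ih (by omega), Q_succ, mul_assoc, ← mul_assoc (t (k+1)),
      comm_D hc hk (by omega), e, mul_assoc (D t k), ← mul_assoc, ← D_succ]
    rw [ih (by omega)]



theorem shift_Q (hc : ∀ i j, i + 1 < j → j < N → t i * t j = t j * t i)
    (hb : ∀ i, i + 1 < N → t i * t (i + 1) * t i = t (i + 1) * t i * t (i + 1))
    {i k : ℕ} (hk : k ≤ N) (hi : i + 1 < k) : t (i + 1) * Q t k = Q t k * t i := by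
  induction k with
  | zero => omega
  | succ k ih =>
    rcases Nat.lt_or_ge (i + 1) k with h | h
    · rw [Q_succ, ← mul_assoc, ih (by omega) h, mul_assoc, hc i k (by omega) (by omega), mul_assoc]
    · obtain rfl : k = i + 1 := by omega
      rw [Q_succ, Q_succ]
      simp only [← mul_assoc]
      rw [comm_Q hc (by omega) (by omega)]
      have := hb i (by omega)
      simp only [mul_assoc] at this ⊢
      rw [this]

theorem shift_Rv (hc : ∀ i j, i + 1 < j → j < N → t i * t j = t j * t i)
    (hb : ∀ i, i + 1 < N → t i * t (i + 1) * t i = t (i + 1) * t i * t (i + 1))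
    {i k : ℕ} (hk : k ≤ N) (hi : i + 1 < k) : Rv t k * t (i + 1) = t i * Rv t k := by
  induction k with
  | zero => omega
  | succ k ih =>
    rcases Nat.lt_or_ge (i + 1) k with h | h
    · rw [Rv, mul_assoc, ih (by omega) h, ← mul_assoc, ← hc i k (by omega) (by omega), mul_assoc]
    · obtain rfl : k = i + 1 := by omega
      rw [Rv, Rv]
      simp only [mul_assoc]
      rw [← comm_Rv hc (by omega) (by omega)]
      have := hb i (by omega)
      simp only [← mul_assoc] at this ⊢
      rw [this]

theorem D_mul (hc : ∀ i j, i + 1 < j → j < N → t i * t j = t j * t i)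
    (hb : ∀ i, i + 1 < N → t i * t (i + 1) * t i = t (i + 1) * t i * t (i + 1))
    {i k : ℕ} (hk : k ≤ N) (hi : i < k) : D t k * t i = t (k - 1 - i) * D t k := by
  induction k generalizing i with
  | zero => omega
  | succ k ih =>
    rcases Nat.lt_or_ge i k with h | h
    · rw [D_succ, mul_assoc, ih (by omega) h, ← mul_assoc, ← shift_Q hc hb hk (by omega), mul_assoc]
      congr 2; omega
    · obtain rfl : i = k := by omega
      cases i with
      | zero => simp [D, Q]
      | succ i =>
        rw [D_succ' hc _ (by omega), mul_assoc, shift_Rv hc hb hk (by omega), ← mul_assoc,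
          ih (by omega) (by omega), mul_assoc]
        congr 2; omega

theorem dvd_D (hc : ∀ i j, i + 1 < j → j < N → t i * t j = t j * t i)
    (hb : ∀ i, i + 1 < N → t i * t (i + 1) * t i = t (i + 1) * t i * t (i + 1))
    {i k : ℕ} (hk : k ≤ N) (hi : i < k) : ∃ y, D t k = t i * y := by
  induction k generalizing i with
  | zero => omega
  | succ k ih =>
    cases i with
    | zero =>
      obtain ⟨y, hy⟩ := Q_succ' t k
      exact ⟨y * D t k, by rw [D_succ, hy, mul_assoc]⟩
    | succ i =>
      obtain ⟨y, hy⟩ := ih (by omega) (i := i) (by omega)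
      exact ⟨Q t (k + 1) * y, by rw [D_succ, hy, ← mul_assoc, ← shift_Q hc hb hk (by omega), mul_assoc]⟩
end
end Gen

namespace Mon
variable {N : ℕ}

/-- generators indexed by naturals -/
def s' (N : ℕ) (i : ℕ) : M N := if h : i < N then s ⟨i, h⟩ else 1

theorem s'_comm (i j : ℕ) (h : i + 1 < j) (hj : j < N) : s' N i * s' N j = s' N j * s' N i := by
  have hi : i < N := by omega
  simp only [s', hj, hi, dif_pos]
  exact s_comm (by unfold Adj; simp; omega)

theorem s'_braid (i : ℕ) (h : i + 1 < N) :
    s' N i * s' N (i + 1) * s' N i = s' N (i + 1) * s' N i * s' N (i + 1) := by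
  have hi : i < N := by omega
  simp only [s', h, hi, dif_pos]
  exact s_braid (Or.inl rfl)

/-- fundamental element -/
def DM (N : ℕ) : M N := Gen.D (s' N) N

theorem DM_s (i : Fin N) : DM N * s i = s i.rev * DM N := by
  have := Gen.D_mul (t := s' N) s'_comm s'_braid le_rfl i.2
  have h2 : N - 1 - (i : ℕ) < N := by have := i.2; omega
  simp only [s', i.2, dif_pos, h2] at this
  have e : i.rev = ⟨N - 1 - (i : ℕ), h2⟩ := by ext; simp [Fin.rev]; omega
  rw [e]
  exact this

theorem s_dvd_DM (i : Fin N) : ∃ y, DM N = s i * y := by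
  have := Gen.dvd_D (t := s' N) s'_comm s'_braid le_rfl i.2
  simp only [s', i.2, dif_pos] at this
  exact this

/-- the central element -/
def δ (N : ℕ) : M N := DM N * DM N

theorem δ_central (x : M N) : δ N * x = x * δ N := by
  induction x using M_induction with
  | h1 => simp
  | hs i y ih =>
    have : δ N * s i = s i * δ N := by
      rw [δ, mul_assoc, DM_s, ← mul_assoc, DM_s, Fin.rev_rev, mul_assoc]
    rw [← mul_assoc, this, mul_assoc, ih, mul_assoc]

theorem mem_central {x : M N} (h : x ∈ Submonoid.powers (δ N)) (y : M N) : x * y = y * x := by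
  obtain ⟨k, rfl⟩ := h
  exact ((show Commute (δ N) y from δ_central y).pow_left k)

instance : OreLocalization.OreSet (Submonoid.powers (δ N)) where
  ore_right_cancel r₁ r₂ s h := ⟨s, by rw [mem_central s.2, mem_central s.2, h]⟩
  oreNum r _ := r
  oreDenom _ s := s
  ore_eq r s := mem_central s.2 r

/-- localisation -/
abbrev K (N : ℕ) := OreLocalization (Submonoid.powers (δ N)) (M N)

/-- map to localisation -/
def toK (N : ℕ) : M N →* K N := OreLocalization.numeratorHom

theorem toK_inj : Function.Injective (toK N) := by
  intro x y h
  have h' : (x /ₒ (1 : Submonoid.powers (δ N))) = y /ₒ 1 := h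
  rw [OreLocalization.oreDiv_eq_iff] at h'
  obtain ⟨u, v, h1, h2⟩ := h'
  have h3 : (u : M N) = v := by simpa using h2
  have h4 : (u : M N) * y = v * x := h1
  rw [← h3] at h4
  exact (mul_left_cancelM _ h4).symm

theorem isUnit_toK_s (i : Fin N) : IsUnit (toK N (s i)) := by
  obtain ⟨y, hy⟩ := s_dvd_DM i
  have h1 : s i * (y * DM N) = δ N := by rw [← mul_assoc, ← hy]; rfl
  have h2 : (y * DM N) * s i = δ N := by
    apply mul_left_cancelM (s i)
    rw [← mul_assoc, h1, δ_central]
  have hu : IsUnit (toK N (δ N)) :=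
    OreLocalization.numerator_isUnit (⟨δ N, Submonoid.mem_powers _⟩ : Submonoid.powers (δ N))
  have e1 := congrArg (toK N) h1
  have e2 := congrArg (toK N) h2
  rw [map_mul] at e1 e2
  obtain ⟨d, hd⟩ := hu
  rw [← hd] at e1 e2
  refine ⟨⟨toK N (s i), toK N (y * DM N) * ↑d⁻¹, ?_, ?_⟩, rfl⟩
  · rw [← mul_assoc, e1]; simp
  · have hcomm : (d : K N) * toK N (s i) = toK N (s i) * d := by
      rw [hd, ← map_mul, ← map_mul, δ_central]
    have : (↑d⁻¹ : K N) * toK N (s i) = toK N (s i) * ↑d⁻¹ := by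
      rw [Units.inv_mul_eq_iff_eq_mul, ← mul_assoc, hcomm, mul_assoc]; simp
    rw [mul_assoc, this, ← mul_assoc, e2]; simp

end Mon

open Mon
variable {n : ℕ}

theorem σ_comm {i j : Fin (n - 1)} (h : (i : ℕ) + 1 < j) : σ i * σ j = σ j * σ i := by
  have : (PresentedGroup.mk (braidRels n)) (.of i * .of j * (.of i)⁻¹ * (.of j)⁻¹) = 1 :=
    PresentedGroup.one_of_mem (Or.inl ⟨i, j, h, rfl⟩)
  simp only [map_mul, map_inv] at this
  rw [mul_inv_eq_one, mul_inv_eq_iff_eq_mul] at this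
  exact this

theorem σ_braid {i j : Fin (n - 1)} (h : (i : ℕ) + 1 = j) :
    σ i * σ j * σ i = σ j * σ i * σ j := by
  have : (PresentedGroup.mk (braidRels n))
      ((.of i * .of j * .of i) * (.of j * .of i * .of j)⁻¹) = 1 :=
    PresentedGroup.one_of_mem (Or.inr ⟨i, j, h, rfl⟩)
  rw [map_mul, map_inv, mul_inv_eq_one] at this
  exact this

/-- The map from the abstract monoid to the group. -/
def toG (n : ℕ) : M (n - 1) →* BraidGroup n :=
  PresentedMonoid.lift (fun i => σ i) (by
    rintro a b (⟨i, j, h, rfl, rfl⟩ | ⟨i, j, h, rfl, rfl⟩)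
    · simpa using σ_comm h
    · simpa using σ_braid h)

theorem toG_s (i : Fin (n - 1)) : toG n (s i) = σ i := by
  simp [toG, s]

/-- Extension to units of the localisation. -/
noncomputable def toKu (n : ℕ) : BraidGroup n →* (K (n - 1))ˣ :=
  PresentedGroup.toGroup (f := fun i => (isUnit_toK_s i).unit) (by
    rintro r (⟨i, j, h, rfl⟩ | ⟨i, j, h, rfl⟩)
    · simp only [map_mul, map_inv, FreeGroup.lift_apply_of]
      rw [mul_inv_eq_one, mul_inv_eq_iff_eq_mul]
      ext
      simp only [Units.val_mul, IsUnit.unit_spec]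
      rw [← map_mul, ← map_mul, s_comm (by unfold Adj; omega)]
    · simp only [map_mul, map_inv, FreeGroup.lift_apply_of]
      rw [mul_inv_eq_one]
      ext
      simp only [Units.val_mul, IsUnit.unit_spec]
      simp only [← map_mul]
      rw [s_braid (Or.inl h)])

theorem toKu_toG (x : M (n - 1)) : (toKu n (toG n x) : K (n - 1)) = toK (n - 1) x := by
  induction x using M_induction with
  | h1 => simp
  | hs i y ih =>
    rw [map_mul, map_mul, map_mul, Units.val_mul, ih, toG_s]
    congr 1
    simp [toKu, σ]

theorem toG_inj : Function.Injective (toG n) := by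
  intro x y h
  apply toK_inj
  rw [← toKu_toG, ← toKu_toG, h]

theorem isPositive_iff {x : BraidGroup n} : IsPositive x ↔ ∃ y, toG n y = x := by
  constructor
  · intro h
    induction h using Submonoid.closure_induction with
    | mem x hx => obtain ⟨i, rfl⟩ := hx; exact ⟨s i, toG_s i⟩
    | one => exact ⟨1, map_one _⟩
    | mul x y _ _ hx hy =>
      obtain ⟨a, rfl⟩ := hx
      obtain ⟨b, rfl⟩ := hy
      exact ⟨a * b, map_mul _ _ _⟩
  · rintro ⟨y, rfl⟩
    induction y using M_induction with
    | h1 => rw [map_one]; exact Submonoid.one_mem _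
    | hs i y ih =>
      rw [map_mul, toG_s]
      exact Submonoid.mul_mem _ (Submonoid.subset_closure ⟨i, rfl⟩) ih

/-- complement in the group -/
noncomputable def cplG (i j : Fin (n - 1)) : BraidGroup n := toG n (cpl i j)

theorem cplG_pos (i j : Fin (n - 1)) : IsPositive (cplG i j) := isPositive_iff.2 ⟨_, rfl⟩

theorem cplG_eq (i j : Fin (n - 1)) : σ i * cplG i j = σ j * cplG j i := by
  have := congrArg (toG n) (cpl_eq i j)
  simp only [map_mul, toG_s] at this
  exact this

/-- local lcm property in the group -/
theorem local_lcm {i j : Fin (n - 1)} {x : BraidGroup n} (hi : LeftDvd (σ i) x)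
    (hj : LeftDvd (σ j) x) : LeftDvd (σ i * cplG i j) x := by
  obtain ⟨u, hu, rfl⟩ := hi
  obtain ⟨v, hv, h⟩ := hj
  obtain ⟨u, rfl⟩ := isPositive_iff.1 hu
  obtain ⟨v, rfl⟩ := isPositive_iff.1 hv
  have : s i * u = s j * v := toG_inj (by simp only [map_mul, toG_s]; exact h.symm)
  obtain ⟨z, rfl, _⟩ := garside_H this
  exact ⟨toG n z, isPositive_iff.2 ⟨_, rfl⟩, by rw [map_mul, mul_assoc]; rfl⟩

theorem toG_DM : toG n (DM (n - 1)) = Δ n := by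
  have hs : ∀ i, toG n (s' (n - 1) i) = σ' n i := by
    intro i
    unfold s' σ'
    split_ifs
    · exact toG_s _
    · exact map_one _
  unfold DM Gen.D Δ Gen.Q
  simp only [map_list_prod, List.map_map]
  congr 1
  apply List.map_congr_left
  intro j _
  simp only [Function.comp, map_list_prod, List.map_map]
  congr 1
  apply List.map_congr_left
  intro i _
  exact hs i

theorem Δ_σ (i : Fin (n - 1)) : Δ n * σ i = σ i.rev * Δ n := by
  have := congrArg (toG n) (DM_s i)
  simpa only [map_mul, toG_s, toG_DM] using this

theorem σ_dvd_Δ (i : Fin (n - 1)) : LeftDvd (σ i) (Δ n) := by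
  obtain ⟨y, hy⟩ := s_dvd_DM i
  exact ⟨toG n y, isPositive_iff.2 ⟨_, rfl⟩, by rw [← toG_DM, hy, map_mul, toG_s]⟩

theorem Δ_pos : IsPositive (Δ n) := isPositive_iff.2 ⟨_, toG_DM⟩

end BraidGroup

namespace BraidGroup
open Mon
variable {n : ℕ}

theorem ldvd_iff {x y : BraidGroup n} : LeftDvd x y ↔ IsPositive (x⁻¹ * y) := by
  constructor
  · rintro ⟨p, hp, rfl⟩; simpa using hp
  · intro h; exact ⟨_, h, by group⟩

theorem pos_one : IsPositive (1 : BraidGroup n) := Submonoid.one_mem _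
theorem pos_mul {x y : BraidGroup n} (hx : IsPositive x) (hy : IsPositive y) :
    IsPositive (x * y) := Submonoid.mul_mem _ hx hy
theorem pos_σ (i : Fin (n - 1)) : IsPositive (σ i : BraidGroup n) :=
  Submonoid.subset_closure ⟨i, rfl⟩

theorem pos_cases {x : BraidGroup n} (h : IsPositive x) :
    x = 1 ∨ ∃ i y, x = σ i * y ∧ IsPositive y := by
  obtain ⟨y, rfl⟩ := isPositive_iff.1 h
  induction y using M_induction with
  | h1 => left; exact map_one _
  | hs i y _ =>
    right
    exact ⟨i, toG n y, by rw [map_mul, toG_s], isPositive_iff.2 ⟨_, rfl⟩⟩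

theorem ldvd_refl (x : BraidGroup n) : LeftDvd x x := ⟨1, pos_one, mul_one x⟩
theorem ldvd_trans {x y z : BraidGroup n} (h1 : LeftDvd x y) (h2 : LeftDvd y z) :
    LeftDvd x z := by
  obtain ⟨p, hp, rfl⟩ := h1
  obtain ⟨q, hq, rfl⟩ := h2
  exact ⟨p * q, pos_mul hp hq, by rw [mul_assoc]⟩
theorem one_ldvd {x : BraidGroup n} : LeftDvd 1 x ↔ IsPositive x := by
  rw [ldvd_iff]; simp
theorem ldvd_mul_right {x p : BraidGroup n} (hp : IsPositive p) : LeftDvd x (x * p) :=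
  ⟨p, hp, rfl⟩
theorem mul_ldvd_mul {g x y : BraidGroup n} : LeftDvd (g * x) (g * y) ↔ LeftDvd x y := by
  rw [ldvd_iff, ldvd_iff]
  have : (g * x)⁻¹ * (g * y) = x⁻¹ * y := by group
  rw [this]
theorem pos_of_ldvd {x y : BraidGroup n} (hx : IsPositive x) (h : LeftDvd x y) :
    IsPositive y := by
  obtain ⟨p, hp, rfl⟩ := h
  exact pos_mul hx hp

/-- exponent sum -/
def eHom (n : ℕ) : BraidGroup n →* Multiplicative ℤ :=
  PresentedGroup.toGroup (f := fun _ => Multiplicative.ofAdd 1) (by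
    rintro r (⟨i, j, h, rfl⟩ | ⟨i, j, h, rfl⟩) <;> simp)

/-- exponent sum, additive -/
def el (x : BraidGroup n) : ℤ := Multiplicative.toAdd (eHom n x)

theorem el_mul (x y : BraidGroup n) : el (x * y) = el x + el y := by simp [el]
theorem el_one : el (1 : BraidGroup n) = 0 := by simp [el]
theorem el_inv (x : BraidGroup n) : el x⁻¹ = - el x := by simp [el]
theorem el_zpow (x : BraidGroup n) (k : ℤ) : el (x ^ k) = k * el x := by simp [el]
theorem el_pow (x : BraidGroup n) (k : ℕ) : el (x ^ k) = k * el x := by simp [el]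
theorem el_σ (i : Fin (n - 1)) : el (σ i : BraidGroup n) = 1 := by
  simp [el, eHom, σ]

theorem el_nonneg {x : BraidGroup n} (h : IsPositive x) : 0 ≤ el x := by
  induction h using Submonoid.closure_induction with
  | mem x hx => obtain ⟨i, rfl⟩ := hx; rw [el_σ]; norm_num
  | one => rw [el_one]
  | mul x y _ _ hx hy => rw [el_mul]; omega

theorem eq_one_of_el {x : BraidGroup n} (h : IsPositive x) (h0 : el x ≤ 0) : x = 1 := by
  rcases pos_cases h with h1 | ⟨i, y, rfl, hy⟩
  · exact h1
  · have := el_nonneg hy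
    rw [el_mul, el_σ] at h0
    omega

theorem el_le {x y : BraidGroup n} (h : LeftDvd x y) : el x ≤ el y := by
  obtain ⟨p, hp, rfl⟩ := h
  have := el_nonneg hp
  rw [el_mul]; omega

theorem eq_of_ldvd_el {x y : BraidGroup n} (h : LeftDvd x y) (h' : el y ≤ el x) : x = y := by
  obtain ⟨p, hp, rfl⟩ := h
  rw [el_mul] at h'
  rw [eq_one_of_el hp (by omega), mul_one]

theorem ldvd_antisymm {x y : BraidGroup n} (h : LeftDvd x y) (h' : LeftDvd y x) : x = y :=
  eq_of_ldvd_el h (el_le h')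

theorem pos_conj_Δ {x : BraidGroup n} (h : IsPositive x) : IsPositive (Δ n * x * (Δ n)⁻¹) := by
  induction h using Submonoid.closure_induction with
  | mem x hx =>
    obtain ⟨i, rfl⟩ := hx
    rw [Δ_σ, mul_inv_cancel_right]; exact pos_σ _
  | one => simpa using pos_one
  | mul x y _ _ hx hy =>
    have : Δ n * (x * y) * (Δ n)⁻¹ = (Δ n * x * (Δ n)⁻¹) * (Δ n * y * (Δ n)⁻¹) := by group
    rw [this]; exact pos_mul hx hy

theorem pos_conj_Δ' {x : BraidGroup n} (h : IsPositive x) : IsPositive ((Δ n)⁻¹ * x * Δ n) := by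
  induction h using Submonoid.closure_induction with
  | mem x hx =>
    obtain ⟨i, rfl⟩ := hx
    have := Δ_σ i.rev
    rw [Fin.rev_rev] at this
    rw [mul_assoc, ← this, inv_mul_cancel_left]; exact pos_σ _
  | one => simpa using pos_one
  | mul x y _ _ hx hy =>
    have : (Δ n)⁻¹ * (x * y) * (Δ n) = ((Δ n)⁻¹ * x * (Δ n)) * ((Δ n)⁻¹ * y * (Δ n)) := by group
    rw [this]; exact pos_mul hx hy

theorem pos_conj_pow (k : ℤ) {x : BraidGroup n} (h : IsPositive x) :
    IsPositive (Δ n ^ k * x * (Δ n ^ k)⁻¹) := by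
  induction k using Int.induction_on with
  | zero => simpa using h
  | succ k ih =>
    have := pos_conj_Δ ih
    convert this using 1; group
  | pred k ih =>
    have := pos_conj_Δ' ih
    convert this using 1; group

theorem pos_conj_iff (k : ℤ) {x : BraidGroup n} :
    IsPositive (Δ n ^ k * x * (Δ n ^ k)⁻¹) ↔ IsPositive x := by
  refine ⟨fun h => ?_, pos_conj_pow k⟩
  have := pos_conj_pow (-k) h
  convert this using 1; group

theorem Δ_conj_hom_spec :
    ∀ i : Fin (n - 1), (MulAut.conj (Δ n)).toMonoidHom (σ i) = σ i.rev := by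
  intro i
  show Δ n * σ i * (Δ n)⁻¹ = _
  rw [Δ_σ, mul_inv_cancel_right]

theorem τ_eq (x : BraidGroup n) : τ n x = Δ n * x * (Δ n)⁻¹ := by
  have h : ∀ i : Fin (n - 1), τ n (σ i) = σ i.rev :=
    Classical.epsilon_spec (p := fun f : BraidGroup n →* BraidGroup n =>
      ∀ i : Fin (n - 1), f (σ i) = σ i.rev) ⟨_, Δ_conj_hom_spec⟩
  have : τ n = (MulAut.conj (Δ n)).toMonoidHom :=
    PresentedGroup.ext (fun i => (h i).trans (Δ_conj_hom_spec i).symm)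
  rw [this]; rfl

theorem Δ_sq_central (x : BraidGroup n) : Δ n * (Δ n * x) = x * (Δ n * Δ n) := by
  have h : ∀ i : Fin (n - 1), ((τ n).comp (τ n)) (σ i) = MonoidHom.id _ (σ i) := by
    intro i
    have : ∀ i : Fin (n-1), τ n (σ i) = σ i.rev := fun i => by rw [τ_eq]; exact Δ_conj_hom_spec i
    simp [this]
  have h2 : (τ n).comp (τ n) = MonoidHom.id _ := PresentedGroup.ext h
  have h3 : τ n (τ n x) = x := DFunLike.congr_fun h2 x
  rw [τ_eq, τ_eq] at h3
  calc Δ n * (Δ n * x) = (Δ n * (Δ n * x * (Δ n)⁻¹) * (Δ n)⁻¹) * (Δ n * Δ n) := by group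
    _ = _ := by rw [h3]

theorem Δ_even_comm (k : ℤ) (x : BraidGroup n) :
    Δ n ^ (k + k) * x = x * Δ n ^ (k + k) := by
  have h : Commute (Δ n * Δ n) x := by
    show Δ n * Δ n * x = _
    rw [mul_assoc, Δ_sq_central]
  have := h.zpow_left k
  have e : (Δ n * Δ n) ^ k = Δ n ^ (k + k) := by
    rw [(Commute.refl (Δ n)).mul_zpow, zpow_add]
  rw [e] at this
  exact this

theorem τpow_eq (k : ℤ) (x : BraidGroup n) : τpow k x = Δ n ^ k * x * (Δ n ^ k)⁻¹ := by
  unfold τpow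
  split_ifs with h
  · obtain ⟨m, rfl⟩ := h
    rw [Δ_even_comm, mul_inv_cancel_right]
  · obtain ⟨m, rfl⟩ := Int.not_even_iff_odd.1 h
    rw [τ_eq, two_mul, add_comm (m + m), zpow_add, zpow_one]
    have := Δ_even_comm m x
    rw [mul_inv_rev, mul_assoc (Δ n) _ x, this]
    group

/-- every element becomes positive after multiplication with a power of `Δ`. -/
theorem exists_pos (g : BraidGroup n) : ∃ k : ℕ, IsPositive (Δ n ^ k * g) := by
  have hpow : ∀ k : ℕ, IsPositive (Δ n ^ k) := fun k => Submonoid.pow_mem _ Δ_pos k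
  let H : Subgroup (BraidGroup n) :=
    { carrier := {g | (∃ k : ℕ, IsPositive (Δ n ^ k * g)) ∧ (∃ k : ℕ, IsPositive (Δ n ^ k * g⁻¹))}
      one_mem' := ⟨⟨0, by simpa using pos_one⟩, ⟨0, by simpa using pos_one⟩⟩
      mul_mem' := by
        have key : ∀ a b : BraidGroup n, (∃ k : ℕ, IsPositive (Δ n ^ k * a)) →
            (∃ k : ℕ, IsPositive (Δ n ^ k * b)) → ∃ k : ℕ, IsPositive (Δ n ^ k * (a * b)) := by
          rintro a b ⟨k, hk⟩ ⟨l, hl⟩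
          refine ⟨l + k, ?_⟩
          have := pos_mul (pos_conj_pow (l : ℤ) hk) hl
          convert this using 1
          rw [zpow_natCast]
          group
        rintro a b ⟨ha, ha'⟩ ⟨hb, hb'⟩
        refine ⟨key _ _ ha hb, ?_⟩
        rw [mul_inv_rev]
        exact key _ _ hb' ha'
      inv_mem' := by
        rintro a ⟨ha, ha'⟩
        exact ⟨ha', by rwa [inv_inv]⟩ }
  have : g ∈ H := by
    apply PresentedGroup.generated_by
    intro i
    refine ⟨⟨0, by rw [pow_zero, one_mul]; exact pos_σ i⟩, 1, ?_⟩
    obtain ⟨p, hp, h⟩ := σ_dvd_Δ i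
    have := pos_conj_Δ hp
    rw [pow_one]
    convert this using 1
    have e : p = (σ i)⁻¹ * Δ n := by rw [← h]; group
    rw [e]
    show Δ n * (σ i)⁻¹ = _
    group
  exact this.1

theorem exists_lcm (k : ℕ) : ∀ m u v : BraidGroup n, IsPositive u → IsPositive v →
    LeftDvd u m → LeftDvd v m → el m < k →
    ∃ e, LeftDvd u e ∧ LeftDvd v e ∧ ∀ m', LeftDvd u m' → LeftDvd v m' → LeftDvd e m' := by
  induction k with
  | zero =>
    intro m u v hu _ hum _ hk
    have := el_nonneg (pos_of_ldvd hu hum)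
    push_cast at hk; omega
  | succ k ih =>
    intro m u v hu hv hum hvm hk
    rcases pos_cases hu with rfl | ⟨i, u', rfl, hu'⟩
    · exact ⟨v, one_ldvd.2 hv, ldvd_refl v, fun m' _ h => h⟩
    rcases pos_cases hv with rfl | ⟨j, v', rfl, hv'⟩
    · exact ⟨_, ldvd_refl _, one_ldvd.2 hu, fun m' h _ => h⟩
    have hi : ∀ m', LeftDvd (σ i * u') m' → LeftDvd (σ i) m' := fun m' h =>
      ldvd_trans (ldvd_mul_right hu') h
    have hj : ∀ m', LeftDvd (σ j * v') m' → LeftDvd (σ j) m' := fun m' h =>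
      ldvd_trans (ldvd_mul_right hv') h
    have hL : ∀ m', LeftDvd (σ i * u') m' → LeftDvd (σ j * v') m' →
        LeftDvd (σ i * cplG i j) m' := fun m' h h' => local_lcm (hi _ h) (hj _ h')
    have hel : ∀ (a : Fin (n-1)) x, m = σ a * x → el x < k := by
      rintro a x rfl
      rw [el_mul, el_σ] at hk; push_cast at hk; omega
    obtain ⟨m1, hm1, rfl⟩ := hi m hum
    obtain ⟨e1, h11, h12, h13⟩ := ih m1 u' (cplG i j) hu' (cplG_pos _ _)
      (mul_ldvd_mul.1 hum) (mul_ldvd_mul.1 (hL _ hum hvm)) (hel i m1 rfl)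
    obtain ⟨m2, hm2, hmm⟩ := hj _ hvm
    have hL2 := hL _ hum hvm
    rw [cplG_eq, ← hmm] at hL2
    have hvm2 := hvm
    rw [← hmm] at hvm2
    obtain ⟨e2, h21, h22, h23⟩ := ih m2 v' (cplG j i) hv' (cplG_pos _ _)
      (mul_ldvd_mul.1 hvm2) (mul_ldvd_mul.1 hL2) (hel j m2 hmm.symm)
    obtain ⟨f, hf, rfl⟩ := h12
    obtain ⟨g, hg, rfl⟩ := h22
    have hLpos : IsPositive (cplG i j) := cplG_pos _ _
    have hfd : ∀ m', LeftDvd (σ i * u') m' → LeftDvd (σ j * v') m' →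
        LeftDvd (σ i * (cplG i j * f)) m' := by
      intro m' h h'
      obtain ⟨w, hw, rfl⟩ := hi m' h
      exact mul_ldvd_mul.2 (h13 _ (mul_ldvd_mul.1 h) (mul_ldvd_mul.1 (hL _ h h')))
    have hgd : ∀ m', LeftDvd (σ i * u') m' → LeftDvd (σ j * v') m' →
        LeftDvd (σ j * (cplG j i * g)) m' := by
      intro m' h h'
      have h3 := hL _ h h'
      rw [cplG_eq] at h3
      obtain ⟨w, hw, rfl⟩ := hj m' h'
      exact mul_ldvd_mul.2 (h23 _ (mul_ldvd_mul.1 h') (mul_ldvd_mul.1 h3))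
    simp only [← mul_assoc] at hfd hgd
    rw [← cplG_eq] at hgd
    obtain ⟨q, hq, hq'⟩ := hL _ hum hvm
    have hf1 := hfd _ hum hvm
    have hg1 := hgd _ hum hvm
    rw [← hq'] at hf1 hg1
    obtain ⟨e3, h31, h32, h33⟩ := ih q f g hf hg (mul_ldvd_mul.1 hf1) (mul_ldvd_mul.1 hg1) (by
      have h1 := congrArg el hq'
      rw [mul_assoc, el_mul, el_mul, el_mul, el_σ] at h1
      have h2 := el_nonneg hLpos
      rw [el_mul, el_σ] at hk
      push_cast at hk; omega)
    refine ⟨σ i * cplG i j * e3, ?_, ?_, ?_⟩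
    · have : LeftDvd (σ i * u') (σ i * cplG i j * f) := by
        rw [mul_assoc]; exact mul_ldvd_mul.2 h11
      exact ldvd_trans this (mul_ldvd_mul.2 h31)
    · have : LeftDvd (σ j * v') (σ i * cplG i j * g) := by
        rw [cplG_eq, mul_assoc]; exact mul_ldvd_mul.2 h21
      exact ldvd_trans this (mul_ldvd_mul.2 h32)
    · intro m' h h'
      obtain ⟨r, hr, rfl⟩ := hL _ h h'
      exact mul_ldvd_mul.2 (h33 _ (mul_ldvd_mul.1 (hfd _ h h')) (mul_ldvd_mul.1 (hgd _ h h')))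

theorem exists_gcd_pos {a b : BraidGroup n} (ha : IsPositive a) (hb : IsPositive b) :
    ∃ m, IsPositive m ∧ LeftDvd m a ∧ LeftDvd m b ∧
    ∀ c, IsPositive c → LeftDvd c a → LeftDvd c b → LeftDvd c m := by
  let S : Set ℕ := {k | ∃ c : BraidGroup n, IsPositive c ∧ LeftDvd c a ∧ LeftDvd c b ∧ el c = k}
  have hS0 : 0 ∈ S := ⟨1, pos_one, one_ldvd.2 ha, one_ldvd.2 hb, by simp [el_one]⟩
  have hSb : BddAbove S := by
    refine ⟨(el a).toNat, ?_⟩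
    rintro k ⟨c, hc, hca, _, hk⟩
    have := el_le hca
    omega
  obtain ⟨m, hm, hma, hmb, hmk⟩ := Nat.sSup_mem ⟨0, hS0⟩ hSb
  refine ⟨m, hm, hma, hmb, ?_⟩
  intro c hc hca hcb
  obtain ⟨e, h1, h2, h3⟩ := exists_lcm ((el a).toNat + 1) a m c hm hc hma hca (by
    have := el_nonneg ha; push_cast; omega)
  have he := el_nonneg (pos_of_ldvd hm h1)
  have : (el e).toNat ∈ S := ⟨e, pos_of_ldvd hm h1, h3 _ hma hca, h3 _ hmb hcb, by omega⟩
  have hle := le_csSup hSb this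
  have : m = e := eq_of_ldvd_el h1 (by omega)
  rw [this]; exact h2

/-- `m` is the meet of `a` and `b` in the group. -/
def IsMeet (m a b : BraidGroup n) : Prop := ∀ c, LeftDvd c m ↔ LeftDvd c a ∧ LeftDvd c b

theorem IsMeet.left {m a b : BraidGroup n} (h : IsMeet m a b) : LeftDvd m a :=
  ((h m).1 (ldvd_refl m)).1
theorem IsMeet.right {m a b : BraidGroup n} (h : IsMeet m a b) : LeftDvd m b :=
  ((h m).1 (ldvd_refl m)).2
theorem IsMeet.unique {m m' a b : BraidGroup n} (h : IsMeet m a b) (h' : IsMeet m' a b) :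
    m = m' :=
  ldvd_antisymm ((h' m).2 ⟨h.left, h.right⟩) ((h m').2 ⟨h'.left, h'.right⟩)

theorem ldvd_mul_iff {g x y : BraidGroup n} : LeftDvd x (g * y) ↔ LeftDvd (g⁻¹ * x) y := by
  rw [ldvd_iff, ldvd_iff]
  have : x⁻¹ * (g * y) = (g⁻¹ * x)⁻¹ * y := by group
  rw [this]

theorem IsMeet.mul_left {m a b : BraidGroup n} (h : IsMeet m a b) (g : BraidGroup n) :
    IsMeet (g * m) (g * a) (g * b) := by
  intro c
  rw [ldvd_mul_iff, ldvd_mul_iff, ldvd_mul_iff, h]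

theorem ldvd_mul_Δ {x y : BraidGroup n} (k : ℤ) :
    LeftDvd x (y * Δ n ^ k) ↔ LeftDvd (x * Δ n ^ (-k)) y := by
  rw [ldvd_iff, ldvd_iff, ← pos_conj_iff k]
  have : Δ n ^ k * (x⁻¹ * (y * Δ n ^ k)) * (Δ n ^ k)⁻¹ = (x * Δ n ^ (-k))⁻¹ * y := by group
  rw [this]

theorem mul_Δ_ldvd_mul_Δ {x y : BraidGroup n} (k : ℤ) :
    LeftDvd (x * Δ n ^ k) (y * Δ n ^ k) ↔ LeftDvd x y := by
  rw [ldvd_mul_Δ]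
  have : x * Δ n ^ k * Δ n ^ (-k) = x := by group
  rw [this]

theorem IsMeet.mul_right {m a b : BraidGroup n} (h : IsMeet m a b) (k : ℤ) :
    IsMeet (m * Δ n ^ k) (a * Δ n ^ k) (b * Δ n ^ k) := by
  intro c
  rw [ldvd_mul_Δ, ldvd_mul_Δ, ldvd_mul_Δ, h]

theorem pos_pow_Δ (k : ℕ) : IsPositive (Δ n ^ k) := Submonoid.pow_mem _ Δ_pos k

theorem isMeet_of_pos {m a b : BraidGroup n} (ha : IsPositive a) (hb : IsPositive b)
    (hma : LeftDvd m a) (hmb : LeftDvd m b)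
    (h : ∀ c, IsPositive c → LeftDvd c a → LeftDvd c b → LeftDvd c m) : IsMeet m a b := by
  intro c
  refine ⟨fun hc => ⟨ldvd_trans hc hma, ldvd_trans hc hmb⟩, ?_⟩
  rintro ⟨hca, hcb⟩
  obtain ⟨k, hk⟩ := exists_pos c
  obtain ⟨g, hg, hga, hgb, hgm⟩ := exists_gcd_pos (pos_mul (pos_pow_Δ k) ha)
    (pos_mul (pos_pow_Δ k) hb)
  have h1 := hgm _ hk (mul_ldvd_mul.2 hca) (mul_ldvd_mul.2 hcb)
  obtain ⟨p, hp, rfl⟩ := hgm (Δ n ^ k) (pos_pow_Δ k) (ldvd_mul_right ha) (ldvd_mul_right hb)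
  exact ldvd_trans (mul_ldvd_mul.1 h1) (h p hp (mul_ldvd_mul.1 hga) (mul_ldvd_mul.1 hgb))

theorem exists_isMeet (a b : BraidGroup n) : ∃ m, IsMeet m a b := by
  obtain ⟨k, hk⟩ := exists_pos a
  obtain ⟨l, hl⟩ := exists_pos b
  have h1 : IsPositive (Δ n ^ (k + l) * a) := by
    rw [add_comm, pow_add, mul_assoc]; exact pos_mul (pos_pow_Δ l) hk
  have h2 : IsPositive (Δ n ^ (k + l) * b) := by
    rw [pow_add, mul_assoc]; exact pos_mul (pos_pow_Δ k) hl
  obtain ⟨m, _, hma, hmb, h⟩ := exists_gcd_pos h1 h2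
  have := (isMeet_of_pos h1 h2 hma hmb h).mul_left (Δ n ^ (k + l))⁻¹
  rw [inv_mul_cancel_left, inv_mul_cancel_left] at this
  exact ⟨_, this⟩

/-- The meet in the group. -/
noncomputable def meet (a b : BraidGroup n) : BraidGroup n := (exists_isMeet a b).choose
theorem meet_spec (a b : BraidGroup n) : IsMeet (meet a b) a b := (exists_isMeet a b).choose_spec

theorem leftMeet_spec {a b : BraidGroup n} (ha : IsPositive a) (hb : IsPositive b) :
    IsPositive (leftMeet a b) ∧ IsMeet (leftMeet a b) a b := by
  have := Classical.epsilon_spec (p := fun m : BraidGroup n =>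
    IsPositive m ∧ LeftDvd m a ∧ LeftDvd m b ∧
    ∀ c, IsPositive c → LeftDvd c a → LeftDvd c b → LeftDvd c m) (exists_gcd_pos ha hb)
  exact ⟨this.1, isMeet_of_pos ha hb this.2.1 this.2.2.1 this.2.2.2⟩

end BraidGroup

namespace BraidGroup
open Mon
variable {n : ℕ}

theorem el_Δ_pos (hn : 2 ≤ n) : 0 < el (Δ n) := by
  have h := σ_dvd_Δ (n := n) ⟨0, by omega⟩
  have := el_le (n := n) h
  rw [el_σ] at this
  omega

theorem pos_left_of_meet {a x y : BraidGroup n} (h : IsMeet a x y) (hx : IsPositive x)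
    (hy : IsPositive y) : IsPositive a :=
  one_ldvd.1 ((h 1).2 ⟨one_ldvd.2 hx, one_ldvd.2 hy⟩)

theorem lw_coprime {a b : BraidGroup n} (h : IsLeftWeighted a b) {c : BraidGroup n}
    (hc : IsPositive c) (h1 : LeftDvd c (a⁻¹ * Δ n)) (h2 : LeftDvd c b) : c = 1 := by
  rcases pos_cases hc with rfl | ⟨i, y, rfl, hy⟩
  · rfl
  · exact absurd ⟨ldvd_trans (ldvd_mul_right hy) h1, ldvd_trans (ldvd_mul_right hy) h2⟩ (h i)

theorem lw_of_coprime {a b : BraidGroup n} (h : ∀ c, IsPositive c → LeftDvd c (a⁻¹ * Δ n) →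
    LeftDvd c b → c = 1) : IsLeftWeighted a b := by
  rintro i ⟨h1, h2⟩
  have := h _ (pos_σ i) h1 h2
  have h3 := el_σ (n := n) i
  rw [this, el_one] at h3
  omega

theorem weighted_meet {a b : BraidGroup n} (ha : IsPermBraid a) (hb : IsPositive b)
    (h : IsLeftWeighted a b) : IsMeet a (a * b) (Δ n) := by
  have h1 : IsPositive (a⁻¹ * Δ n) := ldvd_iff.1 ha.2
  have : IsMeet 1 b (a⁻¹ * Δ n) := by
    refine isMeet_of_pos hb h1 (one_ldvd.2 hb) (one_ldvd.2 h1) ?_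
    intro c hc h2 h3
    rw [lw_coprime h hc h3 h2]
    exact ldvd_refl _
  have := this.mul_left a
  rwa [mul_one, mul_inv_cancel_left] at this

theorem pos_list {L : List (BraidGroup n)} (h : ∀ c ∈ L, IsPositive c) : IsPositive L.prod :=
  Submonoid.list_prod_mem _ h

theorem chain_meet : ∀ (L : List (BraidGroup n)) (a : BraidGroup n),
    (∀ c ∈ a :: L, IsPermBraid c) → (a :: L).IsChain IsLeftWeighted →
    IsMeet a (a :: L).prod (Δ n)
  | [], a, h, _ => by
    intro c
    rw [List.prod_singleton]
    exact ⟨fun hc => ⟨hc, ldvd_trans hc (h a (by simp)).2⟩, fun hc => hc.1⟩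
  | b :: L, a, h, hch => by
    rw [List.isChain_cons_cons] at hch
    have ih := chain_meet L b (fun c hc => h c (List.mem_cons_of_mem _ hc)) hch.2
    rw [List.prod_cons]
    refine weighted_meet (h a (by simp))
      (pos_list fun c hc => (h c (List.mem_cons_of_mem _ hc)).1) ?_
    rintro i ⟨h1, h2⟩
    exact hch.1 i ⟨h1, (ih _).2 ⟨h2, σ_dvd_Δ i⟩⟩

theorem exists_list (k : ℕ) : ∀ p : BraidGroup n, IsPositive p →
    ¬ LeftDvd (Δ n) p → el p < k →
    ∃ L : List (BraidGroup n), (∀ a ∈ L, IsPermBraid a ∧ a ≠ 1 ∧ a ≠ Δ n) ∧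
      L.IsChain IsLeftWeighted ∧ p = L.prod := by
  induction k with
  | zero =>
    intro p hp _ hk
    have := el_nonneg hp
    push_cast at hk; omega
  | succ k ih =>
    intro p hp hΔ hk
    by_cases hp1 : p = 1
    · exact ⟨[], by simp, List.isChain_nil, by simpa using hp1⟩
    obtain ⟨a, ha⟩ := exists_isMeet p (Δ n)
    have hapos := pos_left_of_meet ha hp Δ_pos
    have ha1 : a ≠ 1 := by
      rintro rfl
      rcases pos_cases hp with h | ⟨i, y, rfl, hy⟩
      · exact hp1 h
      · have := el_le ((ha _).2 ⟨ldvd_mul_right hy, σ_dvd_Δ i⟩)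
        rw [el_σ, el_one] at this
        omega
    have haΔ : a ≠ Δ n := by
      rintro rfl
      exact hΔ ha.left
    have hael : 0 < el a := by
      by_contra h
      exact ha1 (eq_one_of_el hapos (by omega))
    obtain ⟨p', hp', rfl⟩ := ha.left
    have hΔ' : ¬ LeftDvd (Δ n) p' := by
      intro h
      apply hΔ
      have h1 : LeftDvd (a * Δ n) (a * p') := mul_ldvd_mul.2 h
      refine ldvd_trans ?_ h1
      have := (ldvd_mul_Δ (n := n) (x := Δ n) (y := a) 1).2
      rw [zpow_one] at this
      apply this
      have e : Δ n * Δ n ^ (-1 : ℤ) = 1 := by group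
      rw [e]
      exact one_ldvd.2 hapos
    rw [el_mul] at hk
    push_cast at hk
    obtain ⟨L, hL1, hL2, rfl⟩ := ih p' hp' hΔ' (by omega)
    refine ⟨a :: L, ?_, ?_, by simp⟩
    · intro c hc
      rcases List.mem_cons.1 hc with rfl | hc
      · exact ⟨⟨hapos, ha.right⟩, ha1, haΔ⟩
      · exact hL1 c hc
    · cases L with
      | nil => simp
      | cons b L =>
        rw [List.isChain_cons_cons]
        refine ⟨?_, hL2⟩
        rintro i ⟨h1, h2⟩
        have h3 : LeftDvd (σ i) (b :: L).prod := by
          rw [List.prod_cons]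
          refine ldvd_trans h2 (ldvd_mul_right (pos_list ?_))
          intro c hc
          exact (hL1 c (List.mem_cons_of_mem _ hc)).1.1
        have h4 := mul_ldvd_mul (g := a).2 h1
        rw [mul_inv_cancel_left] at h4
        have := el_le ((ha _).2 ⟨mul_ldvd_mul (g := a).2 h3, h4⟩)
        rw [el_mul, el_σ] at this
        omega

theorem Δ_zpow_pos {k : ℤ} (hk : 0 ≤ k) : IsPositive (Δ n ^ k) := by
  obtain ⟨m, rfl⟩ := Int.eq_ofNat_of_zero_le hk
  rw [zpow_natCast]; exact pos_pow_Δ m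

theorem zpow_ldvd_zpow {k l : ℤ} (h : k ≤ l) : LeftDvd (Δ n ^ k) (Δ n ^ l) := by
  rw [ldvd_iff, ← zpow_neg, ← zpow_add]
  exact Δ_zpow_pos (by omega)

theorem exists_wf (hD : 0 < el (Δ n)) (x : BraidGroup n) :
    ∃ p : ℤ × List (BraidGroup n), IsWeightedForm p.1 p.2 x := by
  have hb : ∃ b : ℤ, ∀ k : ℤ, LeftDvd (Δ n ^ k) x → k ≤ b := by
    refine ⟨max (el x) 0, fun k hk => ?_⟩
    have := el_le hk
    rw [el_zpow] at this
    by_contra h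
    have h1 : el x < k := lt_of_le_of_lt (le_max_left _ _) (not_le.1 h)
    have h2 : 0 < k := lt_of_le_of_lt (le_max_right _ _) (not_le.1 h)
    nlinarith
  have hne : ∃ k : ℤ, LeftDvd (Δ n ^ k) x := by
    obtain ⟨k, hk⟩ := exists_pos x
    refine ⟨-k, ?_⟩
    rw [ldvd_iff, zpow_neg, inv_inv, zpow_natCast]
    exact hk
  obtain ⟨k, hk, hmax⟩ := Int.exists_greatest_of_bdd hb hne
  obtain ⟨p, hp, rfl⟩ := hk
  have hΔ : ¬ LeftDvd (Δ n) p := by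
    intro h
    have := hmax (k + 1) (by rw [zpow_add_one]; exact mul_ldvd_mul.2 h)
    omega
  obtain ⟨L, h1, h2, rfl⟩ := exists_list (el p + 1).toNat p hp hΔ (by
    have := el_nonneg hp; omega)
  exact ⟨(k, L), h1, h2, rfl⟩

theorem wf_spec (hD : 0 < el (Δ n)) (x : BraidGroup n) : IsWeightedForm (wf x).1 (wf x).2 x :=
  Classical.epsilon_spec (exists_wf hD x)

theorem form_ldvd (hD : 0 < el (Δ n)) {u : ℤ} {L : List (BraidGroup n)} {x : BraidGroup n}
    (h : IsWeightedForm u L x) (k : ℤ) : LeftDvd (Δ n ^ k) x ↔ k ≤ u := by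
  obtain ⟨h1, h2, rfl⟩ := h
  constructor
  · intro h
    by_contra hk
    have h3 := ldvd_trans (zpow_ldvd_zpow (n := n) (show u + 1 ≤ k by omega)) h
    rw [zpow_add_one, mul_ldvd_mul] at h3
    cases L with
    | nil =>
      have := el_le h3
      rw [List.prod_nil, el_one] at this
      omega
    | cons a L =>
      have h4 := chain_meet L a (fun c hc => (h1 c hc).1) h2
      have h5 := (h1 a (by simp))
      exact h5.2.2 (ldvd_antisymm h5.1.2 ((h4 _).2 ⟨h3, ldvd_refl _⟩))
  · intro h
    exact ldvd_trans (zpow_ldvd_zpow h) (ldvd_mul_right (pos_list fun c hc => (h1 c hc).1.1))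

theorem binf_spec (hD : 0 < el (Δ n)) (x : BraidGroup n) (k : ℤ) :
    LeftDvd (Δ n ^ k) x ↔ k ≤ binf x := form_ldvd hD (wf_spec hD x) k

theorem form_binf (hD : 0 < el (Δ n)) {u : ℤ} {L : List (BraidGroup n)} {x : BraidGroup n}
    (h : IsWeightedForm u L x) : binf x = u := by
  apply le_antisymm
  · rw [← form_ldvd hD h, binf_spec hD]
  · rw [← binf_spec hD, form_ldvd hD h]

/-- The initial factor of `x` at level `p`. -/
noncomputable def iot (p : ℤ) (x : BraidGroup n) : BraidGroup n := meet (x * Δ n ^ (-p)) (Δ n)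

theorem iot_spec (p : ℤ) (x : BraidGroup n) : IsMeet (iot p x) (x * Δ n ^ (-p)) (Δ n) :=
  meet_spec _ _

/-- Cycling at level `p`. -/
noncomputable def cy (p : ℤ) (x : BraidGroup n) : BraidGroup n := (iot p x)⁻¹ * x * iot p x

theorem IsMeet.conj {m a b : BraidGroup n} (h : IsMeet m a b) (k : ℤ) :
    IsMeet (Δ n ^ k * m * Δ n ^ (-k)) (Δ n ^ k * a * Δ n ^ (-k)) (Δ n ^ k * b * Δ n ^ (-k)) :=
  (h.mul_left _).mul_right _

theorem Δ_conj_zpow (k : ℤ) : Δ n ^ k * Δ n * Δ n ^ (-k) = Δ n := by group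

theorem form_head {u : ℤ} {L : List (BraidGroup n)} {x : BraidGroup n}
    (h : IsWeightedForm u L x) :
    Δ n ^ u * (L.head?).getD 1 * Δ n ^ (-u) = iot u x := by
  obtain ⟨h1, h2, rfl⟩ := h
  have h3 : IsMeet ((L.head?).getD 1) L.prod (Δ n) := by
    cases L with
    | nil =>
      intro c
      simp only [List.head?_nil, Option.getD_none, List.prod_nil]
      exact ⟨fun h => ⟨h, ldvd_trans h (one_ldvd.2 Δ_pos)⟩, fun h => h.1⟩
    | cons a L => exact chain_meet L a (fun c hc => (h1 c hc).1) h2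
  have h4 := h3.conj u
  rw [Δ_conj_zpow] at h4
  exact h4.unique (iot_spec u _)

theorem cyc_eq (hD : 0 < el (Δ n)) (x : BraidGroup n) : cyc x = cy (binf x) x := by
  have h := form_head (wf_spec hD x)
  unfold cyc cy
  rw [τpow_eq, ← zpow_neg]
  unfold binf bhead
  rw [h]

/-- Twisted complement. -/
def sc (v : ℤ) (a : BraidGroup n) : BraidGroup n := Δ n ^ v * (a⁻¹ * Δ n) * Δ n ^ (-v)

/-- Factors of the form of the inverse. -/
def Gl (u : ℤ) : List (BraidGroup n) → List (BraidGroup n)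
  | [] => []
  | a :: L => Gl (u + 1) L ++ [sc (u + 1) a]

theorem Gl_length : ∀ (L : List (BraidGroup n)) (u : ℤ), (Gl u L).length = L.length
  | [], _ => rfl
  | a :: L, u => by simp [Gl, Gl_length L]

theorem Gl_prod : ∀ (L : List (BraidGroup n)) (u : ℤ),
    (Δ n ^ u * L.prod)⁻¹ = Δ n ^ (- u - L.length) * (Gl u L).prod
  | [], u => by simp [Gl]
  | a :: L, u => by
    have ih := Gl_prod L (u + 1)
    have e : (Δ n ^ u * (a :: L).prod)⁻¹ = (Δ n ^ (u + 1) * L.prod)⁻¹ * sc (u + 1) a := by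
      rw [List.prod_cons, sc]; group
    rw [e, ih]
    simp only [Gl, List.prod_append, List.prod_singleton, List.length_cons]
    rw [← mul_assoc]
    congr 3
    push_cast; ring

theorem Gl_head (L : List (BraidGroup n)) (u : ℤ) :
    (Gl u L).head? = (L.getLast?).map (sc (u + L.length)) := by
  induction L generalizing u with
  | nil => simp [Gl]
  | cons a L ih =>
    simp only [Gl]
    cases L with
    | nil => simp [Gl]
    | cons b L =>
      rw [List.head?_append, ih]
      simp only [List.length_cons, List.getLast?_cons_cons]
      have e : (u + 1 + ((L.length + 1 : ℕ) : ℤ)) = u + ((L.length + 1 + 1 : ℕ) : ℤ) := by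
        push_cast; ring
      rw [e, List.getLast?_cons]
      simp

theorem sc_perm {v : ℤ} {a : BraidGroup n} (h : IsPermBraid a ∧ a ≠ 1 ∧ a ≠ Δ n) :
    IsPermBraid (sc v a) ∧ sc v a ≠ 1 ∧ sc v a ≠ Δ n := by
  refine ⟨⟨?_, ?_⟩, ?_, ?_⟩
  · have := pos_conj_pow v (ldvd_iff.1 h.1.2)
    rwa [← zpow_neg] at this
  · rw [ldvd_iff]
    have e : (sc v a)⁻¹ * Δ n = Δ n ^ (v - 1) * a * (Δ n ^ (v - 1))⁻¹ := by
      rw [sc]; group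
    rw [e]
    exact pos_conj_pow _ h.1.1
  · intro e
    apply h.2.2
    have : a = Δ n * (Δ n ^ (-v) * sc v a * Δ n ^ v)⁻¹ := by rw [sc]; group
    rw [this, e]; group
  · intro e
    apply h.2.1
    have : a = Δ n * (Δ n ^ (-v) * sc v a * Δ n ^ v)⁻¹ := by rw [sc]; group
    rw [this, e]; group

theorem conj_ldvd_iff (k : ℤ) {x y : BraidGroup n} :
    LeftDvd (Δ n ^ k * x * Δ n ^ (-k)) y ↔ LeftDvd x (Δ n ^ (-k) * y * Δ n ^ k) := by
  rw [ldvd_mul_Δ, ldvd_mul_iff, zpow_neg, inv_inv, mul_assoc]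

theorem sc_lw {v : ℤ} {a b : BraidGroup n} (h : IsLeftWeighted a b) :
    IsLeftWeighted (sc (v + 1) b) (sc v a) := by
  apply lw_of_coprime
  intro c hc h1 h2
  have h3 := pos_conj_pow (-v) hc
  rw [← zpow_neg] at h3
  have e1 : LeftDvd (Δ n ^ (-v) * c * Δ n ^ (-(-v))) b := by
    rw [conj_ldvd_iff]
    convert h1 using 1
    rw [sc]; group
  have e2 : LeftDvd (Δ n ^ (-v) * c * Δ n ^ (-(-v))) (a⁻¹ * Δ n) := by
    rw [conj_ldvd_iff]
    convert h2 using 1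
    rw [sc]; group
  have := lw_coprime h h3 e2 e1
  have e : c = Δ n ^ v * (Δ n ^ (-v) * c * Δ n ^ (-(-v))) * Δ n ^ (-v) := by group
  rw [e, this]; group

theorem Gl_chain : ∀ (L : List (BraidGroup n)) (u : ℤ), L.IsChain IsLeftWeighted →
    (Gl u L).IsChain IsLeftWeighted
  | [], _, _ => by simp [Gl]
  | [a], _, _ => by simp [Gl]
  | a :: b :: L, u, h => by
    rw [List.isChain_cons_cons] at h
    have ih := Gl_chain (b :: L) (u + 1) h.2
    rw [Gl, List.isChain_append]
    refine ⟨ih, by simp, ?_⟩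
    intro x hx y hy
    simp only [Gl, List.getLast?_append, List.getLast?_singleton, Option.some_or, Option.mem_def,
      Option.some.injEq, List.head?_cons] at hx hy
    subst hx hy
    exact sc_lw h.1

theorem Gl_mem : ∀ (L : List (BraidGroup n)) (u : ℤ), (∀ a ∈ L, IsPermBraid a ∧ a ≠ 1 ∧ a ≠ Δ n) →
    ∀ a ∈ Gl u L, IsPermBraid a ∧ a ≠ 1 ∧ a ≠ Δ n
  | [], _, _ => by simp [Gl]
  | a :: L, u, h => by
    intro c hc
    rw [Gl, List.mem_append, List.mem_singleton] at hc
    rcases hc with hc | rfl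
    · exact Gl_mem L _ (fun d hd => h d (List.mem_cons_of_mem _ hd)) c hc
    · exact sc_perm (h a (by simp))

theorem form_inv {u : ℤ} {L : List (BraidGroup n)} {x : BraidGroup n}
    (h : IsWeightedForm u L x) : IsWeightedForm (-u - L.length) (Gl u L) x⁻¹ := by
  obtain ⟨h1, h2, rfl⟩ := h
  exact ⟨Gl_mem L u h1, Gl_chain L u h2, Gl_prod L u⟩

theorem bsup_eq (hD : 0 < el (Δ n)) (x : BraidGroup n) : bsup x = - binf x⁻¹ := by
  rw [form_binf hD (form_inv (wf_spec hD x))]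
  unfold bsup binf blen
  ring

theorem decyc_eq (hD : 0 < el (Δ n)) (x : BraidGroup n) :
    decyc x = Δ n * (cyc x⁻¹)⁻¹ * (Δ n)⁻¹ := by
  have hw := wf_spec hD x
  have hf := form_inv hw
  rw [cyc_eq hD, form_binf hD hf, cy, ← form_head hf, Gl_head]
  rcases h : (wf x).2.getLast? with _ | t
  · have h' := List.getLast?_eq_none_iff.1 h
    have hx := hw.2.2
    rw [h', List.prod_nil, mul_one] at hx
    simp only [decyc, btail, h, Option.map_none, Option.getD_none]
    rw [hx]; group
  · simp only [decyc, btail, h, Option.map_some, Option.getD_some, sc]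
    group
end BraidGroup

namespace BraidGroup
open Mon
variable {n : ℕ}

/-- Transport of `c` along cycling at level `p`. -/
noncomputable def tr (p : ℤ) (z c : BraidGroup n) : BraidGroup n :=
  (iot p z)⁻¹ * c * iot p (c⁻¹ * z * c)

theorem ldvd_level {p : ℤ} {z c : BraidGroup n} :
    LeftDvd c (z * Δ n ^ (-p)) ↔ LeftDvd (c * Δ n ^ p) z := by
  rw [ldvd_mul_Δ, neg_neg]

theorem iot_pos {p : ℤ} {z : BraidGroup n} (h : LeftDvd (Δ n ^ p) z) : IsPositive (iot p z) := by
  refine pos_left_of_meet (iot_spec p z) ?_ Δ_pos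
  rw [← one_ldvd, ldvd_level, one_mul]
  exact h

theorem c_iot (p : ℤ) (z c : BraidGroup n) :
    IsMeet (c * iot p (c⁻¹ * z * c)) (z * c * Δ n ^ (-p)) (c * Δ n) := by
  have h := (iot_spec p (c⁻¹ * z * c)).mul_left c
  have e : c * (c⁻¹ * z * c * Δ n ^ (-p)) = z * c * Δ n ^ (-p) := by group
  rwa [e] at h

theorem conj_mul (z c d : BraidGroup n) : (c * d)⁻¹ * z * (c * d) = d⁻¹ * (c⁻¹ * z * c) * d := by
  group

theorem tr_mul (p : ℤ) (z c d : BraidGroup n) :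
    tr p z (c * d) = tr p z c * tr p (c⁻¹ * z * c) d := by
  unfold tr
  rw [conj_mul]
  group

theorem ldvd_mul_Δ_self {c : BraidGroup n} (hc : IsPositive c) : LeftDvd (Δ n) (c * Δ n) := by
  have := (ldvd_mul_Δ (n := n) (x := Δ n) (y := c) 1).2
  rw [zpow_one] at this
  apply this
  have e : Δ n * Δ n ^ (-1 : ℤ) = 1 := by group
  rw [e]
  exact one_ldvd.2 hc

theorem tr_pos (p : ℤ) (z : BraidGroup n) {c : BraidGroup n} (hc : IsPositive c) :
    IsPositive (tr p z c) := by
  unfold tr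
  rw [mul_assoc, ← ldvd_iff, c_iot]
  refine ⟨ldvd_trans (iot_spec p z).left ((mul_Δ_ldvd_mul_Δ _).2 (ldvd_mul_right hc)), ?_⟩
  exact ldvd_trans (iot_spec p z).right (ldvd_mul_Δ_self hc)

theorem tr_ldvd (p : ℤ) (z : BraidGroup n) {c d : BraidGroup n} (h : LeftDvd c d) :
    LeftDvd (tr p z c) (tr p z d) := by
  obtain ⟨q, hq, rfl⟩ := h
  rw [tr_mul]
  exact ldvd_mul_right (tr_pos _ _ hq)

theorem iot_conj (p k : ℤ) (z : BraidGroup n) :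
    iot p (Δ n ^ k * z * Δ n ^ (-k)) = Δ n ^ k * iot p z * Δ n ^ (-k) := by
  have h := (iot_spec p z).conj k
  rw [Δ_conj_zpow] at h
  have e : Δ n ^ k * (z * Δ n ^ (-p)) * Δ n ^ (-k) =
    Δ n ^ k * z * Δ n ^ (-k) * Δ n ^ (-p) := by group
  rw [e] at h
  exact (iot_spec p _).unique h

theorem tr_Δ (p k : ℤ) (z : BraidGroup n) : tr p z (Δ n ^ k) = Δ n ^ k := by
  have h := iot_conj p (-k) z
  rw [neg_neg] at h
  unfold tr
  rw [← zpow_neg, h]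
  group

theorem tr_meet (p : ℤ) (z : BraidGroup n) {m c d : BraidGroup n} (h : IsMeet m c d) :
    IsMeet (tr p z m) (tr p z c) (tr p z d) := by
  unfold tr
  simp only [mul_assoc (iot p z)⁻¹]
  apply IsMeet.mul_left
  intro w
  have h1 := (h.mul_left z).mul_right (-p)
  have h2 := h.mul_right 1
  simp only [zpow_one] at h2
  rw [c_iot, c_iot, c_iot, h1, h2]
  tauto

theorem cy_tr (p : ℤ) (z c : BraidGroup n) :
    (tr p z c)⁻¹ * cy p z * tr p z c = cy p (c⁻¹ * z * c) := by
  unfold tr cy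
  group

theorem cy_level {p : ℤ} {z : BraidGroup n} (h : LeftDvd (Δ n ^ p) z) :
    LeftDvd (Δ n ^ p) (cy p z) := by
  have hi := iot_pos h
  obtain ⟨r, hr, e⟩ := (iot_spec p z).left
  have hz : z = iot p z * r * Δ n ^ p := by rw [e]; group
  have hc : cy p z = Δ n ^ p * (Δ n ^ (-p) * r * (Δ n ^ (-p))⁻¹ * iot p z) := by
    have : cy p z = (iot p z)⁻¹ * (iot p z * r * Δ n ^ p) * iot p z := by
      rw [← hz]; rfl
    rw [this]; group
  rw [hc]
  exact ldvd_mul_right (pos_mul (pos_conj_pow _ hr) hi)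

theorem level_meet {p : ℤ} {y m a b : BraidGroup n} (h : IsMeet m a b)
    (ha : LeftDvd (Δ n ^ p) (a⁻¹ * y * a)) (hb : LeftDvd (Δ n ^ p) (b⁻¹ * y * b)) :
    LeftDvd (Δ n ^ p) (m⁻¹ * y * m) := by
  rw [mul_assoc, ldvd_mul_iff, inv_inv] at ha hb ⊢
  rw [h.mul_left y]
  exact ⟨ldvd_trans ((mul_Δ_ldvd_mul_Δ p).2 h.left) ha,
    ldvd_trans ((mul_Δ_ldvd_mul_Δ p).2 h.right) hb⟩

theorem isConj_conj (y c : BraidGroup n) : IsConj y (c⁻¹ * y * c) :=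
  isConj_iff.2 ⟨c⁻¹, by group⟩

theorem cy_isConj (p : ℤ) (z : BraidGroup n) : IsConj z (cy p z) := isConj_conj _ _

theorem cyc_iter_eq (hD : 0 < el (Δ n)) {p : ℤ} {z : BraidGroup n}
    (hmax : ∀ w, IsConj z w → binf w ≤ p) (hz : LeftDvd (Δ n ^ p) z) (i : ℕ) :
    cyc^[i] z = (cy p)^[i] z ∧ IsConj z (cyc^[i] z) ∧ LeftDvd (Δ n ^ p) (cyc^[i] z) := by
  induction i with
  | zero => exact ⟨rfl, IsConj.refl _, hz⟩
  | succ i ih =>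
    obtain ⟨h1, h2, h3⟩ := ih
    rw [Function.iterate_succ_apply', Function.iterate_succ_apply', ← h1]
    have hb : binf (cyc^[i] z) = p := le_antisymm (hmax _ h2) ((binf_spec hD _ _).1 h3)
    have e : cyc (cyc^[i] z) = cy p (cyc^[i] z) := by rw [cyc_eq hD, hb]
    rw [e]
    exact ⟨rfl, h2.trans (cy_isConj _ _), cy_level h3⟩

theorem binf_cyc (hD : 0 < el (Δ n)) (z : BraidGroup n) : binf z ≤ binf (cyc z) := by
  rw [← binf_spec hD, cyc_eq hD]
  exact cy_level ((binf_spec hD _ _).2 le_rfl)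

theorem binf_iter_mono (hD : 0 < el (Δ n)) (z : BraidGroup n) :
    Monotone (fun i : ℕ => binf (cyc^[i] z)) := by
  apply monotone_nat_of_le_succ
  intro i
  rw [Function.iterate_succ_apply']
  exact binf_cyc hD _

theorem binf_iter (hD : 0 < el (Δ n)) {z : BraidGroup n} {M : ℕ} (hM : 0 < M)
    (h : cyc^[M] z = z) (i : ℕ) : binf (cyc^[i] z) = binf z := by
  apply le_antisymm
  · have h1 := binf_iter_mono hD z (show i ≤ M * i from Nat.le_mul_of_pos_left i hM)
    have h2 : cyc^[M * i] z = z := (Function.IsPeriodicPt.mul_const (f := cyc) (x := z) h i)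
    simp only [h2] at h1
    exact h1
  · exact binf_iter_mono hD z (Nat.zero_le i)

theorem exists_pos_conj {z w : BraidGroup n} (h : IsConj z w) :
    ∃ c, IsPositive c ∧ c⁻¹ * z * c = w := by
  obtain ⟨d, hd⟩ := isConj_iff.1 h
  obtain ⟨k, hk⟩ := exists_pos d⁻¹
  refine ⟨Δ n ^ (k + k) * d⁻¹, ?_, ?_⟩
  · rw [pow_add, mul_assoc]; exact pos_mul (pos_pow_Δ k) hk
  · have := Δ_even_comm (n := n) k z
    rw [← Nat.cast_add, zpow_natCast] at this
    have e : (Δ n ^ (k + k) * d⁻¹)⁻¹ * z * (Δ n ^ (k + k) * d⁻¹) =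
      d * (Δ n ^ (k + k))⁻¹ * (z * Δ n ^ (k + k)) * d⁻¹ := by group
    rw [e, ← this, ← hd]; group

theorem exists_ldvd_Δ (c : BraidGroup n) : ∃ k : ℕ, LeftDvd c (Δ n ^ (k : ℤ)) := by
  obtain ⟨k, hk⟩ := exists_pos c⁻¹
  refine ⟨k, ?_⟩
  rw [ldvd_iff]
  have := pos_conj_pow (-k : ℤ) hk
  convert this using 1
  rw [← zpow_natCast]
  group

theorem iot_ne (hD : 0 < el (Δ n)) {z : BraidGroup n} : el (iot (binf z) z) < el (Δ n) := by
  by_contra h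
  have h1 := eq_of_ldvd_el (iot_spec (binf z) z).right (not_lt.1 h)
  have h2 := (iot_spec (binf z) z).left
  rw [h1, ldvd_level, ← zpow_one_add, binf_spec hD] at h2
  omega

theorem cyc_periodic_max (hD : 0 < el (Δ n)) {z : BraidGroup n} {M : ℕ} (hM : 0 < M)
    (h : cyc^[M] z = z) (w : BraidGroup n) (hw : IsConj z w) : binf w ≤ binf z := by
  by_contra hlt
  obtain ⟨c, hc, rfl⟩ := exists_pos_conj hw
  obtain ⟨k, hk⟩ := exists_ldvd_Δ c
  have hl : LeftDvd (Δ n ^ (binf z + 1)) (c⁻¹ * z * c) := (binf_spec hD _ _).2 (by omega)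
  have key : ∀ i : ℕ, ∃ c, IsPositive c ∧ LeftDvd c (Δ n ^ (k : ℤ)) ∧ (i : ℤ) ≤ el c ∧
      LeftDvd (Δ n ^ (binf z + 1)) (c⁻¹ * (cyc^[i] z) * c) := by
    intro i
    induction i with
    | zero => exact ⟨c, hc, hk, by simpa using el_nonneg hc, hl⟩
    | succ i ih =>
      obtain ⟨c, h1, h2, h3, h4⟩ := ih
      have hb := binf_iter hD hM h i
      have h5 := iot_ne hD (z := cyc^[i] z)
      rw [hb] at h5
      have hi : iot (binf z) (c⁻¹ * (cyc^[i] z) * c) = Δ n := by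
        refine ldvd_antisymm (iot_spec _ _).right ((iot_spec _ _ _).2 ⟨?_, ldvd_refl _⟩)
        rw [ldvd_level, ← zpow_one_add, add_comm]
        exact h4
      refine ⟨tr (binf z) (cyc^[i] z) c, tr_pos _ _ h1, ?_, ?_, ?_⟩
      · rw [← tr_Δ (binf z) k (cyc^[i] z)]
        exact tr_ldvd _ _ h2
      · unfold tr
        rw [el_mul, el_mul, el_inv, hi]
        push_cast
        omega
      · rw [Function.iterate_succ_apply', cyc_eq hD (cyc^[i] z), hb, cy_tr]
        unfold cy
        rw [hi, mul_assoc, ldvd_mul_iff, inv_inv]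
        have := (mul_Δ_ldvd_mul_Δ (n := n) 1).2 h4
        rw [zpow_one] at this
        convert this using 1
        group
  obtain ⟨c, _, h2, h3, _⟩ := key (k * el (Δ n) + 1).toNat
  have h6 := el_le h2
  rw [el_zpow] at h6
  omega

/-- Simultaneous cycling and transport. -/
noncomputable def Ph (p : ℤ) (q : BraidGroup n × BraidGroup n) : BraidGroup n × BraidGroup n :=
  (cy p q.1, tr p q.1 q.2)

theorem Ph_fst (p : ℤ) (q : BraidGroup n × BraidGroup n) (i : ℕ) :
    ((Ph p)^[i] q).1 = (cy p)^[i] q.1 := by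
  induction i generalizing q with
  | zero => rfl
  | succ i ih => rw [Function.iterate_succ_apply, ih]; rfl

theorem Ph_conj (p : ℤ) (q : BraidGroup n × BraidGroup n) (i : ℕ) :
    ((Ph p)^[i] q).2⁻¹ * ((Ph p)^[i] q).1 * ((Ph p)^[i] q).2 =
      (cy p)^[i] (q.2⁻¹ * q.1 * q.2) := by
  induction i generalizing q with
  | zero => rfl
  | succ i ih =>
    rw [Function.iterate_succ_apply, ih, Function.iterate_succ_apply]
    congr 1
    exact cy_tr _ _ _

theorem Ph_pos (p : ℤ) {z c : BraidGroup n} (hc : IsPositive c) (hc' : LeftDvd c (Δ n)) (i : ℕ) :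
    IsPositive ((Ph p)^[i] (z, c)).2 ∧ LeftDvd ((Ph p)^[i] (z, c)).2 (Δ n) := by
  induction i generalizing z c with
  | zero => exact ⟨hc, hc'⟩
  | succ i ih =>
    rw [Function.iterate_succ_apply]
    refine ih (tr_pos p z hc) ?_
    have h := tr_ldvd p z hc'
    have h2 := tr_Δ p 1 z
    rw [zpow_one] at h2
    rwa [h2] at h

theorem Ph_meet (p : ℤ) {z m c d : BraidGroup n} (h : IsMeet m c d) (i : ℕ) :
    IsMeet ((Ph p)^[i] (z, m)).2 ((Ph p)^[i] (z, c)).2 ((Ph p)^[i] (z, d)).2 := by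
  induction i generalizing z m c d with
  | zero => exact h
  | succ i ih =>
    simp only [Function.iterate_succ_apply]
    exact ih (tr_meet p z h)

theorem Ph_inj (p : ℤ) {z c d : BraidGroup n} (h : c⁻¹ * z * c = d⁻¹ * z * d) (i : ℕ)
    (h' : ((Ph p)^[i] (z, c)).2 = ((Ph p)^[i] (z, d)).2) : c = d := by
  induction i generalizing z c d with
  | zero => exact h'
  | succ i ih =>
    simp only [Function.iterate_succ_apply] at h'
    have h1 : tr p z c = tr p z d := by
      refine ih ?_ h'
      change (tr p z c)⁻¹ * cy p z * tr p z c = (tr p z d)⁻¹ * cy p z * tr p z d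
      rw [cy_tr, cy_tr, h]
    unfold tr at h1
    rw [h] at h1
    exact mul_left_cancel (mul_right_cancel h1)

theorem finite_pos (k : ℕ) : {c : BraidGroup n | IsPositive c ∧ el c < k}.Finite := by
  induction k with
  | zero =>
    convert Set.finite_empty
    ext c
    simp only [Set.mem_ofPred_eq, Set.mem_empty_iff_false, iff_false, not_and, not_lt]
    intro hc
    simpa using el_nonneg hc
  | succ k ih =>
    refine ((Set.finite_singleton (1 : BraidGroup n)).union
      (Set.finite_iUnion fun i : Fin (n - 1) => ih.image (fun c => σ i * c))).subset ?_
    rintro c ⟨hc, hk⟩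
    rcases pos_cases hc with rfl | ⟨i, y, rfl, hy⟩
    · left; rfl
    · right
      rw [el_mul, el_σ] at hk
      push_cast at hk
      exact Set.mem_iUnion.2 ⟨i, y, ⟨hy, by omega⟩, rfl⟩

theorem finite_perm : {c : BraidGroup n | IsPositive c ∧ LeftDvd c (Δ n)}.Finite := by
  refine (finite_pos (n := n) (el (Δ n) + 1).toNat).subset ?_
  rintro c ⟨h1, h2⟩
  have := el_le h2
  have := el_nonneg h1
  exact ⟨h1, by omega⟩

theorem Ph_periodic (p : ℤ) {y a : BraidGroup n} (ha : IsPermBraid a) {N : ℕ} (hN : 0 < N)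
    (h1 : (cy p)^[N] y = y) (h2 : (cy p)^[N] (a⁻¹ * y * a) = a⁻¹ * y * a) :
    ∃ M, 0 < M ∧ (Ph p)^[M] (y, a) = (y, a) := by
  let T : Set (BraidGroup n × BraidGroup n) :=
    {q | q.1 = y ∧ (IsPositive q.2 ∧ LeftDvd q.2 (Δ n)) ∧ q.2⁻¹ * q.1 * q.2 = a⁻¹ * y * a}
  have hfin : T.Finite := by
    refine (Set.Finite.prod (Set.finite_singleton y) (finite_perm (n := n))).subset ?_
    rintro ⟨u, c⟩ ⟨hu, hc, _⟩
    exact ⟨hu, hc⟩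
  have hmaps : Set.MapsTo ((Ph p)^[N]) T T := by
    rintro ⟨u, c⟩ ⟨hu, hc, he⟩
    simp only at hu hc he
    subst hu
    refine ⟨?_, Ph_pos p hc.1 hc.2 N, ?_⟩
    · rw [Ph_fst]; exact h1
    · rw [Ph_conj]; simp only [he]; exact h2
  have := hfin.to_subtype
  have hinj : Function.Injective (hmaps.restrict ((Ph p)^[N]) T T) := by
    rintro ⟨⟨u, c⟩, hu, hc, he⟩ ⟨⟨u', d⟩, hu', hd, he'⟩ h
    simp only at hu hc he hu' hd he'
    subst hu
    subst hu'
    have h3 := congrArg (fun q => q.1.2) h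
    have : c = d := Ph_inj p (he.trans he'.symm) N h3
    subst this
    rfl
  have hmem : (y, a) ∈ T := ⟨rfl, ha, rfl⟩
  obtain ⟨M, hM, hp⟩ := hinj.mem_periodicPts ⟨(y, a), hmem⟩
  refine ⟨N * M, Nat.mul_pos hN hM, ?_⟩
  have h4 := congrArg Subtype.val (hp : _ = _)
  rw [Set.MapsTo.iterate_restrict] at h4
  rw [Function.iterate_mul]
  exact h4

theorem cy_meet_periodic (p : ℤ) {y a b m : BraidGroup n} (ha : IsPermBraid a)
    (hb : IsPermBraid b) (hm : IsMeet m a b) {N : ℕ} (hN : 0 < N)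
    (h1 : (cy p)^[N] y = y) (h2 : (cy p)^[N] (a⁻¹ * y * a) = a⁻¹ * y * a)
    (h3 : (cy p)^[N] (b⁻¹ * y * b) = b⁻¹ * y * b) :
    ∃ M, 0 < M ∧ (cy p)^[M] (m⁻¹ * y * m) = m⁻¹ * y * m := by
  obtain ⟨A, hA, ea⟩ := Ph_periodic p ha hN h1 h2
  obtain ⟨B, hB, eb⟩ := Ph_periodic p hb hN h1 h3
  refine ⟨A * B, Nat.mul_pos hA hB, ?_⟩
  have ea' : (Ph p)^[A * B] (y, a) = (y, a) :=
    Function.IsPeriodicPt.mul_const (f := Ph p) (x := (y, a)) ea B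
  have eb' : (Ph p)^[A * B] (y, b) = (y, b) :=
    Function.IsPeriodicPt.const_mul (f := Ph p) (x := (y, b)) eb A
  have hmm := Ph_meet p (z := y) hm (A * B)
  rw [ea', eb'] at hmm
  have e2 := hmm.unique hm
  have e1 : ((Ph p)^[A * B] (y, m)).1 = y := by
    have := Ph_fst p (y, a) (A * B)
    rw [ea'] at this
    rw [Ph_fst]
    exact this.symm
  have := Ph_conj p (y, m) (A * B)
  rw [e1, e2] at this
  exact this.symm

/-- `z` is periodic under cycling. -/
def CP (z : BraidGroup n) : Prop := ∃ M : ℕ, 0 < M ∧ cyc^[M] z = z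

theorem CP_meet (hD : 0 < el (Δ n)) {y a b m : BraidGroup n} (ha : IsPermBraid a)
    (hb : IsPermBraid b) (hm : IsMeet m a b) (h1 : CP y) (h2 : CP (a⁻¹ * y * a))
    (h3 : CP (b⁻¹ * y * b)) : CP (m⁻¹ * y * m) := by
  obtain ⟨M1, hM1, e1⟩ := h1
  obtain ⟨M2, hM2, e2⟩ := h2
  obtain ⟨M3, hM3, e3⟩ := h3
  have hmax := cyc_periodic_max hD hM1 e1
  have hmaxa := cyc_periodic_max hD hM2 e2 y (isConj_conj y a).symm
  have hmaxb := cyc_periodic_max hD hM3 e3 y (isConj_conj y b).symm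
  have k1 : LeftDvd (Δ n ^ binf y) y := (binf_spec hD _ _).2 le_rfl
  have k2 : LeftDvd (Δ n ^ binf y) (a⁻¹ * y * a) := (binf_spec hD _ _).2 hmaxa
  have k3 : LeftDvd (Δ n ^ binf y) (b⁻¹ * y * b) := (binf_spec hD _ _).2 hmaxb
  have km := level_meet hm k2 k3
  have hmx : ∀ c : BraidGroup n, ∀ w, IsConj (c⁻¹ * y * c) w → binf w ≤ binf y :=
    fun c w hw => hmax w ((isConj_conj y c).trans hw)
  have f1 : cyc^[M1 * M2 * M3] y = y :=
    (Function.IsPeriodicPt.mul_const (f := cyc) (x := y) e1 M2).mul_const M3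
  have f2 : cyc^[M1 * M2 * M3] (a⁻¹ * y * a) = a⁻¹ * y * a :=
    (Function.IsPeriodicPt.const_mul (f := cyc) (x := a⁻¹ * y * a) e2 M1).mul_const M3
  have f3 : cyc^[M1 * M2 * M3] (b⁻¹ * y * b) = b⁻¹ * y * b :=
    Function.IsPeriodicPt.const_mul (f := cyc) (x := b⁻¹ * y * b) e3 (M1 * M2)
  rw [(cyc_iter_eq hD hmax k1 _).1] at f1
  rw [(cyc_iter_eq hD (hmx a) k2 _).1] at f2
  rw [(cyc_iter_eq hD (hmx b) k3 _).1] at f3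
  obtain ⟨M, hM, e⟩ := cy_meet_periodic (binf y) ha hb hm
    (Nat.mul_pos (Nat.mul_pos hM1 hM2) hM3) f1 f2 f3
  exact ⟨M, hM, by rw [(cyc_iter_eq hD (hmx m) km _).1]; exact e⟩

theorem binf_conj (hD : 0 < el (Δ n)) (k : ℤ) (z : BraidGroup n) :
    binf (Δ n ^ k * z * Δ n ^ (-k)) = binf z := by
  have h : ∀ j : ℤ, j ≤ binf (Δ n ^ k * z * Δ n ^ (-k)) ↔ j ≤ binf z := by
    intro j
    rw [← binf_spec hD, ← binf_spec hD, ldvd_mul_Δ, ldvd_mul_iff]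
    have e : (Δ n ^ k)⁻¹ * (Δ n ^ j * Δ n ^ (- -k)) = Δ n ^ j := by group
    rw [e]
  exact le_antisymm ((h _).1 le_rfl) ((h _).2 le_rfl)

theorem cyc_conj (hD : 0 < el (Δ n)) (k : ℤ) (z : BraidGroup n) :
    cyc (Δ n ^ k * z * Δ n ^ (-k)) = Δ n ^ k * cyc z * Δ n ^ (-k) := by
  rw [cyc_eq hD, cyc_eq hD, binf_conj hD, cy, cy, iot_conj]
  group

theorem decyc_iter (hD : 0 < el (Δ n)) (z : BraidGroup n) (N : ℕ) :
    decyc^[N] z = Δ n ^ (N : ℤ) * (cyc^[N] z⁻¹)⁻¹ * Δ n ^ (-(N : ℤ)) := by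
  induction N with
  | zero => simp
  | succ N ih =>
    rw [Function.iterate_succ_apply', Function.iterate_succ_apply', ih, decyc_eq hD]
    have e : (Δ n ^ (N : ℤ) * (cyc^[N] z⁻¹)⁻¹ * Δ n ^ (-(N : ℤ)))⁻¹ =
      Δ n ^ (N : ℤ) * (cyc^[N] z⁻¹) * Δ n ^ (-(N : ℤ)) := by group
    rw [e, cyc_conj hD]
    push_cast
    group

theorem decyc_iter_even (hD : 0 < el (Δ n)) (z : BraidGroup n) (N : ℕ) :
    decyc^[N * 2] z = (cyc^[N * 2] z⁻¹)⁻¹ := by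
  rw [decyc_iter hD]
  have := Δ_even_comm (n := n) N (cyc^[N * 2] z⁻¹)⁻¹
  have e : ((N * 2 : ℕ) : ℤ) = N + N := by push_cast; ring
  rw [e, this]; group

theorem decyc_periodic (hD : 0 < el (Δ n)) (z : BraidGroup n) :
    (∃ N : ℕ, 0 < N ∧ decyc^[N] z = z) ↔ CP z⁻¹ := by
  constructor
  · rintro ⟨N, hN, h⟩
    refine ⟨N * 2, by omega, ?_⟩
    have h2 : decyc^[N * 2] z = z := Function.IsPeriodicPt.mul_const (f := decyc) (x := z) h 2
    rw [decyc_iter_even hD] at h2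
    exact inv_eq_iff_eq_inv.1 h2
  · rintro ⟨N, hN, h⟩
    refine ⟨N * 2, by omega, ?_⟩
    have h2 : cyc^[N * 2] z⁻¹ = z⁻¹ := Function.IsPeriodicPt.mul_const (f := cyc) (x := z⁻¹) h 2
    rw [decyc_iter_even hD, h2, inv_inv]

theorem conj_inv' (y c : BraidGroup n) : (c⁻¹ * y * c)⁻¹ = c⁻¹ * y⁻¹ * c := by group

theorem SS_meet (hD : 0 < el (Δ n)) {x y a b m : BraidGroup n} (hm : IsMeet m a b)
    (h1 : y ∈ SS x) (h2 : a⁻¹ * y * a ∈ SS x) (h3 : b⁻¹ * y * b ∈ SS x) :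
    m⁻¹ * y * m ∈ SS x := by
  refine ⟨h1.1.trans (isConj_conj y m), fun z hz => (h1.2 z hz).trans ?_⟩
  rw [← binf_spec hD]
  exact level_meet hm ((binf_spec hD _ _).2 (h2.2 _ h1.1)) ((binf_spec hD _ _).2 (h3.2 _ h1.1))

theorem bsup_meet (hD : 0 < el (Δ n)) {x y a b m : BraidGroup n} (hm : IsMeet m a b)
    (h1 : y ∈ SSS x) (h2 : a⁻¹ * y * a ∈ SSS x) (h3 : b⁻¹ * y * b ∈ SSS x) :
    m⁻¹ * y * m ∈ SSS x := by
  refine ⟨SS_meet hD hm h1.1 h2.1 h3.1, fun z hz => le_trans ?_ (h1.2 z hz)⟩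
  have ha := h2.2 y h1.1.1
  have hb := h3.2 y h1.1.1
  rw [bsup_eq hD, bsup_eq hD y, conj_inv', neg_le_neg_iff, ← binf_spec hD] at *
  exact level_meet hm ha hb

theorem conv_first (hD : 0 < el (Δ n)) (x : BraidGroup n)
    (P : Set (BraidGroup n))
    (hP : P = SS x ∨ P = SSS x ∨ P = USS x ∨ P = RSSS x) :
    ∀ y ∈ P, ∀ a b m : BraidGroup n, IsPermBraid a → IsPermBraid b → IsMeet m a b →
      a⁻¹ * y * a ∈ P → b⁻¹ * y * b ∈ P → m⁻¹ * y * m ∈ P := by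
  intro y hy a b m ha hb hm h2 h3
  rcases hP with rfl | rfl | rfl | rfl
  · exact SS_meet hD hm hy h2 h3
  · exact bsup_meet hD hm hy h2 h3
  · exact ⟨bsup_meet hD hm hy.1 h2.1 h3.1, CP_meet hD ha hb hm hy.2 h2.2 h3.2⟩
  · refine ⟨hy.1.trans (isConj_conj y m), CP_meet hD ha hb hm hy.2.1 h2.2.1 h3.2.1, ?_⟩
    have k1 := (decyc_periodic hD _).1 hy.2.2
    have k2 := (decyc_periodic hD _).1 h2.2.2
    have k3 := (decyc_periodic hD _).1 h3.2.2
    rw [decyc_periodic hD]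
    rw [conj_inv'] at k2 k3 ⊢
    exact CP_meet hD ha hb hm k1 k2 k3
end BraidGroup


namespace BraidGroup

/-- convexity, Franco–González-Meneses, Gebhardt: each of the four
invariant subsets is closed under conjugating by the meet of two conjugators, and
each of its elements admits a unique minimal permutation-braid conjugator. -/
theorem convexity_of_invariant_sets (n : ℕ) (x : BraidGroup n)
    (P : Set (BraidGroup n))
    (hP : P = SS x ∨ P = SSS x ∨ P = USS x ∨ P = RSSS x) :
    (∀ y ∈ P, ∀ a b : BraidGroup n, IsPermBraid a → IsPermBraid b →
      a⁻¹ * y * a ∈ P → b⁻¹ * y * b ∈ P →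
      (leftMeet a b)⁻¹ * y * leftMeet a b ∈ P) ∧
    (∀ y ∈ P, ∃! a : BraidGroup n, IsPermBraid a ∧ a⁻¹ * y * a ∈ P ∧
      ∀ b : BraidGroup n, IsPermBraid b → b⁻¹ * y * b ∈ P → LeftDvd a b) := by
  have hone : IsPermBraid (1 : BraidGroup n) := ⟨pos_one, one_ldvd.2 Δ_pos⟩
  have hconj : ∀ y : BraidGroup n, (1 : BraidGroup n)⁻¹ * y * 1 = y := fun y => by simp
  constructor
  · intro y hy a b ha hb h1 h2
    rcases Nat.lt_or_ge n 2 with hn | hn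
    · have hs : ∀ g : BraidGroup n, g = 1 := by
        intro g
        have : g ∈ (⊥ : Subgroup (BraidGroup n)) := by
          apply PresentedGroup.generated_by
          intro i
          exact absurd i.2 (by omega)
        exact Subgroup.mem_bot.1 this
      rw [hs (leftMeet a b), hconj]
      exact hy
    · exact conv_first (el_Δ_pos hn) x P hP y hy a b _ ha hb (leftMeet_spec ha.1 hb.1).2 h1 h2
  · intro y hy
    refine ⟨1, ⟨hone, by rw [hconj]; exact hy, fun b hb _ => one_ldvd.2 hb.1⟩, ?_⟩
    rintro a ⟨ha, _, hmin⟩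
    exact ldvd_antisymm (hmin 1 hone (by rw [hconj]; exact hy)) (one_ldvd.2 ha.1)

end BraidGroup
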